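/- arXiv:1610.01916 — 5 statements merged into one kernel-verified Lean document; each statement's English description precedes it below -/
import Mathlib

section
/- Division of holomorphic germs via boundedness on an argument level set (Lemma 2.2): Let d ≥ 1, r > 0 and θ ∈ ℝ. Let f and g be holomorphic on the polydisk D(0;r) ⊆ ℂ^d with f(0) = g(0) = 0 and g not identically zero, and suppose there is a constant M > 0 such that |f(x)| ≤ M·|g(x)| for every x ∈ D(0;r) with g(x) ≠ 0 and g(x) = |g(x)|·e^{iθ}. Then there exist ρ with 0 < ρ ≤ r and a holomorphic function q on D(0;ρ) such that f(x) = q(x)·g(x) for all x ∈ D(0;ρ). -/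
open Set Complex

noncomputable section

/-- Open polydisk of radius `r` centered at `0` in `ℂ^d`. -/
def polydisk (d : ℕ) (r : ℝ) : Set (Fin d → ℂ) :=
  {x | ∀ j, ‖x j‖ < r}

open Filter Topology

lemma superpos {K E : Type*} [TopologicalSpace K] [CompactSpace K] [NormedAddCommGroup E]
    [NormedSpace ℂ E] (g : E → ℂ) (hg : AnalyticAt ℂ g 0) :
    ∃ R > 0, ∃ G : C(K, E) → C(K, ℂ), AnalyticOnNhd ℂ G (Metric.ball 0 R) ∧
      ∀ u ∈ Metric.ball (0 : C(K, E)) R, ∀ s, G u s = g (u s) := by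
  obtain ⟨p, R, hp⟩ := hg
  let m : ∀ n, MultilinearMap ℂ (fun _ : Fin n => C(K, E)) C(K, ℂ) := fun n =>
    { toFun := fun u => ⟨fun s => p n (fun i => u i s), by fun_prop⟩
      map_update_add' := by
        intro _ u i x y
        ext s
        have h : ∀ w : C(K, E), (fun j => (Function.update u i w) j s)
            = Function.update (fun j => u j s) i (w s) := by
          intro w; funext j
          by_cases hj : j = i
          · subst hj; simp
          · simp [hj]
        simp [h]
      map_update_smul' := by
        intro _ u i c x
        ext s
        have h : ∀ w : C(K, E), (fun j => (Function.update u i w) j s)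
            = Function.update (fun j => u j s) i (w s) := by
          intro w; funext j
          by_cases hj : j = i
          · subst hj; simp
          · simp [hj]
        simp [h] }
  have hm : ∀ n u, ‖m n u‖ ≤ ‖p n‖ * ∏ i, ‖u i‖ := by
    intro n u
    rw [ContinuousMap.norm_le _ (by positivity)]
    intro s
    refine ((p n).le_opNorm _).trans ?_
    gcongr with i
    exact (u i).norm_coe_le_norm s
  let P : FormalMultilinearSeries ℂ C(K, E) C(K, ℂ) := fun n => (m n).mkContinuous ‖p n‖ (hm n)
  have hP : ∀ n u s, P n u s = p n (fun i => u i s) := fun _ _ _ => rfl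
  have hrad : p.radius ≤ P.radius := by
    apply FormalMultilinearSeries.radius_le_of_le
    intro n
    exact MultilinearMap.mkContinuous_norm_le _ (norm_nonneg _) _
  have hR : R ≤ P.radius := hp.r_le.trans hrad
  have hpos : 0 < P.radius := hp.r_pos.trans_le hR
  obtain ⟨R', hR'0, hR'⟩ := ENNReal.lt_iff_exists_nnreal_btwn.1 hp.r_pos
  have hsub : Metric.ball (0 : C(K, E)) R' ⊆ Metric.eball 0 R := by
    intro u hu
    rw [← Metric.eball_coe] at hu
    exact Metric.eball_subset_eball hR'.le hu
  refine ⟨R', by exact_mod_cast hR'0, P.sum, ?_, ?_⟩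
  · exact (P.hasFPowerSeriesOnBall hpos).analyticOnNhd.mono
      (hsub.trans (Metric.eball_subset_eball hR))
  · intro u hu s
    have h1 := P.hasSum (Metric.eball_subset_eball hR (hsub hu))
    have h2 := h1.mapL (ContinuousMap.evalCLM ℂ s)
    have h3 : u s ∈ Metric.eball (0 : E) R := by
      have : u s ∈ Metric.ball (0 : E) R' := by
        rw [mem_ball_zero_iff] at hu ⊢
        exact (u.norm_coe_le_norm s).trans_lt hu
      rw [← Metric.eball_coe] at this
      exact Metric.eball_subset_eball hR'.le this
    have h4 := hp.hasSum h3
    rw [zero_add] at h4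
    exact h2.unique h4

lemma onevar (ε : ℝ) (hε : 0 < ε) (θ M : ℝ) (F G : ℂ → ℂ)
    (hF : AnalyticOnNhd ℂ F (Metric.closedBall 0 ε))
    (hG : AnalyticOnNhd ℂ G (Metric.closedBall 0 ε))
    (hG0 : ∀ z ∈ Metric.sphere (0 : ℂ) ε, G z ≠ 0)
    (hb : ∀ z ∈ Metric.closedBall (0 : ℂ) ε, G z ≠ 0 →
      G z = (‖G z‖ : ℂ) * Complex.exp (θ * Complex.I) → ‖F z‖ ≤ M * ‖G z‖) :
    F 0 = Real.circleAverage (fun z => F z / G z) 0 ε * G 0 := by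
  have hGne : ∀ z ∈ Metric.closedBall (0 : ℂ) ε, ¬ (∀ᶠ w in 𝓝 z, G w = 0) := by
    intro z hz h
    have := hG.eqOn_zero_of_preconnected_of_eventuallyEq_zero
      (convex_closedBall _ _).isPreconnected hz h
    have hs : (ε : ℂ) ∈ Metric.sphere (0 : ℂ) ε := by simp [abs_of_pos hε]
    exact hG0 _ hs (this (Metric.sphere_subset_closedBall hs))
  have hGne' : ∀ z ∈ Metric.closedBall (0 : ℂ) ε, ∀ᶠ w in 𝓝[≠] z, G w ≠ 0 := by
    intro z hz
    exact ((hG z hz).eventually_eq_zero_or_eventually_ne_zero).resolve_left (hGne z hz)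
  have hmer : MeromorphicOn (F / G) (Metric.closedBall 0 ε) := fun z hz =>
    (hF z hz).meromorphicAt.div (hG z hz).meromorphicAt
  have hord : ∀ z ∈ Metric.closedBall (0 : ℂ) ε, 0 ≤ meromorphicOrderAt (F / G) z := by
    intro z hz
    by_cases hz0 : G z = 0
    · by_contra hneg
      rw [not_le, ← tendsto_cobounded_iff_meromorphicOrderAt_neg (hmer z hz),
        ← tendsto_norm_atTop_iff_cobounded] at hneg
      have hzb : Metric.closedBall (0 : ℂ) ε ∈ 𝓝 z := by
        apply mem_of_superset (Metric.isOpen_ball.mem_nhds _) Metric.ball_subset_closedBall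
        rw [mem_ball_zero_iff]
        rw [mem_closedBall_zero_iff] at hz
        refine lt_of_le_of_ne hz fun h => hG0 z (by simpa using h) hz0
      have hev := hneg.eventually_gt_atTop M
      rw [eventually_nhdsWithin_iff] at hev
      rcases (hG z hz).eventually_constant_or_nhds_le_map_nhds with h | h
      · rw [hz0] at h; exact hGne z hz h
      · rw [hz0] at h
        have hmem := h (image_mem_map (inter_mem hev hzb))
        have hc : Tendsto (fun t : ℝ => (t : ℂ) * Complex.exp (θ * Complex.I)) (𝓝[>] 0) (𝓝 0) := by
          have : Continuous (fun t : ℝ => (t : ℂ) * Complex.exp (θ * Complex.I)) := by fun_prop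
          have h2 := this.tendsto 0
          simp only [ofReal_zero, zero_mul] at h2
          exact h2.mono_left nhdsWithin_le_nhds
        obtain ⟨t, ⟨w, ⟨hw1, hw2⟩, hwt⟩, ht⟩ :=
          ((hc.eventually_mem hmem).and self_mem_nhdsWithin).exists
        have ht : 0 < t := ht
        have hn : ‖G w‖ = t := by
          rw [hwt, norm_mul, Complex.norm_exp_ofReal_mul_I]; simp [abs_of_pos ht]
        have hGw : G w ≠ 0 := by rw [← norm_pos_iff, hn]; exact ht
        have h3 := hb w hw2 hGw (by rw [hn]; exact hwt)
        have h4 := hw1 (by rintro rfl; exact hGw hz0)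
        rw [Pi.div_apply, norm_div, lt_div_iff₀ (by rw [hn]; exact ht)] at h4
        linarith
    · exact ((hF z hz).div (hG z hz) hz0).meromorphicOrderAt_nonneg
  set h := toMeromorphicNFOn (F / G) (Metric.closedBall 0 ε) with hh
  have han : AnalyticOnNhd ℂ h (Metric.closedBall 0 ε) := by
    intro z hz
    rw [← (meromorphicNFOn_toMeromorphicNFOn (F / G) _ hz).meromorphicOrderAt_nonneg_iff_analyticAt,
      meromorphicOrderAt_toMeromorphicNFOn hmer hz]
    exact hord z hz
  have hmul : ∀ z ∈ Metric.closedBall (0 : ℂ) ε, h z * G z = F z := by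
    intro z hz
    have e : (h * G) =ᶠ[𝓝[≠] z] F := by
      filter_upwards [hmer.toMeromorphicNFOn_eq_self_on_nhdsNE hz, hGne' z hz] with w h1 h2
      rw [Pi.mul_apply, hh, h1]; simp [h2]
    rw [((han z hz).mul (hG z hz)).continuousAt.eventuallyEq_nhds_iff_eventuallyEq_nhdsNE
      (hF z hz).continuousAt] at e
    exact e.eq_of_nhds
  have havg : Real.circleAverage h 0 ε = h 0 := by
    apply circleAverage_of_differentiable_on_off_countable countable_empty
    · rw [abs_of_pos hε]; exact han.continuousOn
    · intro z hz
      rw [abs_of_pos hε] at hz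
      exact (han z (Metric.ball_subset_closedBall hz.1)).differentiableAt
  have hcong : Real.circleAverage (fun z => F z / G z) 0 ε = Real.circleAverage h 0 ε := by
    apply Real.circleAverage_congr_sphere
    intro z hz
    rw [abs_of_pos hε] at hz
    simp only
    rw [div_eq_iff (hG0 z hz), hmul z (Metric.sphere_subset_closedBall hz)]
  rw [hcong, havg, hmul 0 (by simp [hε.le])]

/-- Averaging functional. -/
def avgCLM : C(Icc (0 : ℝ) (2 * Real.pi), ℂ) →L[ℂ] ℂ :=
  LinearMap.mkContinuous
    { toFun := fun u => (2 * Real.pi)⁻¹ •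
        ∫ t in (0 : ℝ)..(2 * Real.pi), u (projIcc 0 (2 * Real.pi) Real.two_pi_pos.le t)
      map_add' := by
        intro u w
        rw [← smul_add, ← intervalIntegral.integral_add]
        · rfl
        · exact (u.continuous.comp continuous_projIcc).intervalIntegrable _ _
        · exact (w.continuous.comp continuous_projIcc).intervalIntegrable _ _
      map_smul' := by
        intro c u
        rw [RingHom.id_apply, smul_comm c, ← intervalIntegral.integral_smul c]
        rfl } 1 (by
    intro u
    have h := intervalIntegral.norm_integral_le_of_norm_le_const (a := (0 : ℝ))
      (b := 2 * Real.pi) (C := ‖u‖)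
      (f := fun t => u (projIcc 0 (2 * Real.pi) Real.two_pi_pos.le t))
      (fun t _ => u.norm_coe_le_norm _)
    have hp := Real.two_pi_pos
    simp only [LinearMap.coe_mk, AddHom.coe_mk, norm_smul]
    rw [sub_zero, abs_of_pos hp] at h
    rw [Real.norm_of_nonneg (by positivity), inv_mul_le_iff₀ hp]
    linarith)

lemma avgCLM_eq (u : C(Icc (0 : ℝ) (2 * Real.pi), ℂ)) (F : ℂ → ℂ) (ε : ℝ)
    (h : ∀ s : Icc (0 : ℝ) (2 * Real.pi), u s = F (circleMap 0 ε s)) :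
    avgCLM u = Real.circleAverage F 0 ε := by
  change (2 * Real.pi)⁻¹ •
        ∫ t in (0 : ℝ)..(2 * Real.pi), u (projIcc 0 (2 * Real.pi) Real.two_pi_pos.le t) = _
  rw [Real.circleAverage]
  congr 1
  apply intervalIntegral.integral_congr
  intro t ht
  rw [uIcc_of_le Real.two_pi_pos.le] at ht
  simp only
  rw [h, projIcc_of_mem _ ht]

/-- Constant functions, as a continuous linear map. -/
def constCM (d : ℕ) : (Fin d → ℂ) →L[ℂ] C(Icc (0 : ℝ) (2 * Real.pi), Fin d → ℂ) :=
  LinearMap.mkContinuous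
    { toFun := fun x => ContinuousMap.const _ x
      map_add' := fun _ _ => rfl
      map_smul' := fun _ _ => rfl } 1 (by
    intro x
    rw [one_mul, ContinuousMap.norm_le _ (norm_nonneg _)]
    intro s
    exact le_rfl)

lemma polydisk_eq {d : ℕ} {r : ℝ} (hr : 0 < r) : polydisk d r = Metric.ball 0 r := by
  ext x
  rw [mem_ball_zero_iff, pi_norm_lt_iff hr]
  rfl

/-- **Division of holomorphic germs via boundedness on an argument level set** (Lemma 2.2).
If `f, g` are holomorphic on the polydisk `D(0;r) ⊆ ℂ^d`, vanish at `0`, `g` is not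
identically zero, and `|f| ≤ M·|g|` on the set where `g ≠ 0` and `arg g = θ`, then `g`
divides `f` as a germ at the origin. -/
theorem division_via_boundedness_on_arg_level_set
    (d : ℕ) (hd : 1 ≤ d) (r : ℝ) (hr : 0 < r) (θ : ℝ)
    (f g : (Fin d → ℂ) → ℂ)
    (hf : AnalyticOnNhd ℂ f (polydisk d r))
    (hg : AnalyticOnNhd ℂ g (polydisk d r))
    (hf0 : f 0 = 0) (hg0 : g 0 = 0)
    (hgne : ∃ x ∈ polydisk d r, g x ≠ 0)
    (M : ℝ) (hM : 0 < M)
    (hbound : ∀ x ∈ polydisk d r, g x ≠ 0 →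
      g x = (‖g x‖ : ℂ) * Complex.exp (θ * Complex.I) →
      ‖f x‖ ≤ M * ‖g x‖) :
    ∃ ρ, 0 < ρ ∧ ρ ≤ r ∧ ∃ q : (Fin d → ℂ) → ℂ,
      AnalyticOnNhd ℂ q (polydisk d ρ) ∧
      ∀ x ∈ polydisk d ρ, f x = q x * g x := by
  rw [polydisk_eq hr] at hf hg hgne hbound
  obtain ⟨v, hv, hgv⟩ := hgne
  obtain ⟨R₁, hR₁, Gf, hGf, hGf'⟩ := superpos (K := Icc (0 : ℝ) (2 * Real.pi)) f
    (hf 0 (Metric.mem_ball_self hr))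
  obtain ⟨R₂, hR₂, Gg, hGg, hGg'⟩ := superpos (K := Icc (0 : ℝ) (2 * Real.pi)) g
    (hg 0 (Metric.mem_ball_self hr))
  obtain ⟨R, hR, hRr, hRR₁, hRR₂⟩ : ∃ R > 0, R ≤ r ∧ R ≤ R₁ ∧ R ≤ R₂ :=
    ⟨min r (min R₁ R₂), by positivity, min_le_left _ _,
      (min_le_right _ _).trans (min_le_left _ _), (min_le_right _ _).trans (min_le_right _ _)⟩
  -- non-vanishing along the line through v
  have hline : ∀ᶠ t : ℂ in 𝓝[≠] 0, g (t • v) ≠ 0 := by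
    let S : Set ℂ := (fun t : ℂ => t • v) ⁻¹' Metric.ball 0 r
    have hS : AnalyticOnNhd ℂ (fun t : ℂ => g (t • v)) S := by
      intro t ht
      exact (hg _ ht).comp_of_eq (by fun_prop) rfl
    have hSc : Convex ℝ S := by
      have : S = ((LinearMap.toSpanSingleton ℂ (Fin d → ℂ) v).restrictScalars ℝ) ⁻¹'
        Metric.ball 0 r := rfl
      rw [this]
      exact (convex_ball _ _).linear_preimage _
    have h0 : (0 : ℂ) ∈ S := by simp [S, hr]
    have h1 : (1 : ℂ) ∈ S := by simpa [S] using hv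
    refine ((hS 0 h0).eventually_eq_zero_or_eventually_ne_zero).resolve_left fun h => ?_
    have := hS.eqOn_zero_of_preconnected_of_eventuallyEq_zero hSc.isPreconnected h0 h h1
    simp only [one_smul, Pi.zero_apply] at this
    exact hgv this
  obtain ⟨ε, hε, hεv, hεg⟩ : ∃ ε : ℝ, 0 < ε ∧ ε * ‖v‖ < R / 2 ∧
      ∀ t ∈ Metric.sphere (0 : ℂ) ε, g (t • v) ≠ 0 := by
    rw [eventually_nhdsWithin_iff, Metric.eventually_nhds_iff] at hline
    obtain ⟨ε₀, hε₀, h⟩ := hline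
    have hc : Tendsto (fun t : ℝ => t * ‖v‖) (𝓝[>] 0) (𝓝 0) := by
      have : Continuous (fun t : ℝ => t * ‖v‖) := by fun_prop
      have h2 := this.tendsto 0
      simp only [zero_mul] at h2
      exact h2.mono_left nhdsWithin_le_nhds
    obtain ⟨ε, ⟨h1, h2⟩, h3⟩ := (((hc.eventually_lt_const (half_pos hR)).and
      (Ioo_mem_nhdsGT hε₀)).and self_mem_nhdsWithin).exists
    refine ⟨ε, h3, h1, fun t ht => ?_⟩
    rw [mem_sphere_zero_iff_norm] at ht
    apply h
    · rw [dist_zero_right, ht]; exact h2.2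
    · rintro rfl
      rw [norm_zero] at ht
      exact h2.1.ne ht
  let u₀ : C(Icc (0 : ℝ) (2 * Real.pi), Fin d → ℂ) :=
    ⟨fun s => circleMap 0 ε s • v, by fun_prop⟩
  let A : (Fin d → ℂ) → C(Icc (0 : ℝ) (2 * Real.pi), Fin d → ℂ) :=
    fun x => constCM d x + u₀
  have hAan : ∀ x, AnalyticAt ℂ A x := fun x =>
    ((constCM d).analyticAt x).add analyticAt_const
  have hAs : ∀ x s, A x s = x + circleMap 0 ε s • v := fun x s => rfl
  have hline2 : ∀ x ∈ Metric.ball (0 : Fin d → ℂ) (R / 2), ∀ t ∈ Metric.closedBall (0 : ℂ) ε,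
      ‖x + t • v‖ < R := by
    intro x hx t ht
    rw [mem_ball_zero_iff] at hx
    rw [mem_closedBall_zero_iff] at ht
    have : ‖t‖ * ‖v‖ ≤ ε * ‖v‖ := by gcongr
    have := norm_add_le x (t • v)
    rw [norm_smul] at this
    linarith
  have hcm : ∀ s : ℝ, circleMap 0 ε s ∈ Metric.sphere (0 : ℂ) ε := fun s =>
    circleMap_mem_sphere 0 hε.le s
  have hA : ∀ x ∈ Metric.ball (0 : Fin d → ℂ) (R / 2), ‖A x‖ < R := by
    intro x hx
    rw [ContinuousMap.norm_lt_iff _ hR]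
    intro s
    rw [hAs]
    exact hline2 x hx _ (Metric.sphere_subset_closedBall (hcm s))
  have hA1 : ∀ x ∈ Metric.ball (0 : Fin d → ℂ) (R / 2), A x ∈ Metric.ball 0 R₁ := fun x hx =>
    mem_ball_zero_iff.2 ((hA x hx).trans_le hRR₁)
  have hA2 : ∀ x ∈ Metric.ball (0 : Fin d → ℂ) (R / 2), A x ∈ Metric.ball 0 R₂ := fun x hx =>
    mem_ball_zero_iff.2 ((hA x hx).trans_le hRR₂)
  have h00 : (0 : Fin d → ℂ) ∈ Metric.ball (0 : Fin d → ℂ) (R / 2) :=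
    Metric.mem_ball_self (half_pos hR)
  have hΦf : AnalyticAt ℂ (fun x => Gf (A x)) 0 := (hGf _ (hA1 0 h00)).comp (hAan 0)
  have hΦg : AnalyticAt ℂ (fun x => Gg (A x)) 0 := (hGg _ (hA2 0 h00)).comp (hAan 0)
  have hunit : IsUnit (Gg (A 0)) := by
    rw [ContinuousMap.isUnit_iff_forall_ne_zero]
    intro s
    rw [hGg' _ (hA2 0 h00), hAs, zero_add]
    exact hεg _ (hcm s)
  have hinv : AnalyticAt ℂ (fun x => Ring.inverse (Gg (A x))) 0 :=
    AnalyticAt.comp (g := Ring.inverse) (analyticOnNhd_inverse _ hunit) hΦg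
  let q : (Fin d → ℂ) → ℂ := fun x => avgCLM (Gf (A x) * Ring.inverse (Gg (A x)))
  have hq : AnalyticAt ℂ q 0 :=
    AnalyticAt.comp (g := avgCLM) (ContinuousLinearMap.analyticAt _ _) (hΦf.mul hinv)
  have hev : ∀ᶠ x in 𝓝 (0 : Fin d → ℂ), IsUnit (Gg (A x)) ∧ AnalyticAt ℂ q x ∧
      x ∈ Metric.ball (0 : Fin d → ℂ) (R / 2) :=
    (hΦg.continuousAt.eventually_mem (Units.isOpen.mem_nhds hunit)).and
      (hq.eventually_analyticAt.and (Metric.isOpen_ball.mem_nhds h00))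
  rw [Metric.eventually_nhds_iff_ball] at hev
  obtain ⟨ρ, hρ, H⟩ := hev
  have hmin : 0 < min ρ r := lt_min hρ hr
  refine ⟨min ρ r, hmin, min_le_right _ _, q, ?_, ?_⟩
  · rw [polydisk_eq hmin]
    intro x hx
    exact (H x (Metric.ball_subset_ball (min_le_left _ _) hx)).2.1
  · rw [polydisk_eq hmin]
    intro x hx
    obtain ⟨hxu, -, hxR⟩ := H x (Metric.ball_subset_ball (min_le_left _ _) hx)
    have hxu' := hxu
    rw [ContinuousMap.isUnit_iff_forall_ne_zero] at hxu
    have hmem : ∀ t ∈ Metric.closedBall (0 : ℂ) ε, x + t • v ∈ Metric.ball (0 : Fin d → ℂ) r :=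
      fun t ht => mem_ball_zero_iff.2 ((hline2 x hxR t ht).trans_le hRr)
    have key := onevar ε hε θ M (fun t => f (x + t • v)) (fun t => g (x + t • v))
      (fun t ht => (hf _ (hmem t ht)).comp_of_eq (by fun_prop) rfl)
      (fun t ht => (hg _ (hmem t ht)).comp_of_eq (by fun_prop) rfl)
      (by
        intro z hz
        have hz' : z ∈ circleMap 0 ε '' Ioc 0 (2 * Real.pi) := by
          rw [image_circleMap_Ioc, abs_of_pos hε]; exact hz
        obtain ⟨s, hs, rfl⟩ := hz'
        have := hxu ⟨s, Ioc_subset_Icc_self hs⟩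
        rw [hGg' _ (hA2 x hxR), hAs] at this
        exact this)
      (fun z hz => hbound _ (hmem z hz))
    simp only [zero_smul, add_zero] at key
    rw [key]
    congr 1
    symm
    apply avgCLM_eq
    intro s
    have hi : Gg (A x) s * (Ring.inverse (Gg (A x))) s = 1 := by
      rw [← ContinuousMap.mul_apply, Ring.mul_inverse_cancel _ hxu', ContinuousMap.one_apply]
    rw [ContinuousMap.mul_apply, hGf' _ (hA1 x hxR), hAs, eq_div_iff, mul_assoc, ← hAs x s,
      ← hGg' _ (hA2 x hxR), mul_comm ((Ring.inverse (Gg (A x))) s), hi, mul_one]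
    rw [← hAs x s, ← hGg' _ (hA2 x hxR)]
    exact hxu s
end
end

section
/- Quantitative division by powers of an analytic function (Lemma 2.3): Let d ≥ 1, let D' and D be open connected subsets of ℂ^d such that the closure of D' is compact and contained in D, let P be holomorphic on D and not identically zero, and let θ ∈ ℝ. Set A = {x ∈ D : P(x) ≠ 0 and P(x) = |P(x)|·e^{iθ}}. Then there exists a constant K > 0 such that for every n ∈ ℕ and every bounded holomorphic function f on D for which f/P^n is bounded on A, there exists a holomorphic function q on D' with f(x) = q(x)·P(x)^n for all x ∈ D' and sup_{x ∈ D'} |q(x)| ≤ K^n · sup_{x ∈ D} |f(x)|. -/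
open Set Complex
noncomputable section
open Filter Topology NNReal ENNReal in
lemma aux_changeOrigin_bound {E : Type*} [NormedAddCommGroup E] [NormedSpace ℂ E]
    (p : FormalMultilinearSeries ℂ E ℂ) (r : ℝ≥0) (hr : (r + r : ℝ≥0∞) < p.radius) :
    ∃ T : ℝ≥0, ∀ y : E, ‖y‖₊ ≤ r → ∀ k, ‖p.changeOrigin y k‖₊ * r ^ k ≤ T := by
  have hs := p.changeOriginSeries_summable_aux₁ hr
  refine ⟨∑' k, ∑' s : Σ l : ℕ, { s : Finset (Fin (k + l)) // s.card = l },
          ‖p (k + s.1)‖₊ * r ^ s.1 * r ^ k, fun y hy k => ?_⟩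
  have hk := p.changeOriginSeries_summable_aux₂ (lt_of_le_of_lt le_self_add hr) k
  have hyr : (‖y‖₊ : ℝ≥0∞) < p.radius :=
    lt_of_le_of_lt (le_trans (by exact_mod_cast hy) le_self_add) hr
  calc ‖p.changeOrigin y k‖₊ * r ^ k
      ≤ (∑' s : Σ l : ℕ, { s : Finset (Fin (k + l)) // s.card = l },
          ‖p (k + s.1)‖₊ * r ^ s.1) * r ^ k := by
        gcongr
        refine (p.nnnorm_changeOrigin_le k hyr).trans ?_
        refine Summable.tsum_le_tsum (fun s => by gcongr) ?_ hk
        exact p.changeOriginSeries_summable_aux₂ hyr k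
    _ = ∑' s : Σ l : ℕ, { s : Finset (Fin (k + l)) // s.card = l },
          ‖p (k + s.1)‖₊ * r ^ s.1 * r ^ k := by rw [NNReal.tsum_mul_right]
    _ ≤ ∑' k, ∑' s : Σ l : ℕ, { s : Finset (Fin (k + l)) // s.card = l },
          ‖p (k + s.1)‖₊ * r ^ s.1 * r ^ k :=
        (NNReal.summable_sigma.1 hs).2.le_tsum k (fun _ _ => zero_le)

open Filter Topology NNReal ENNReal in
lemma aux_uniform_taylor {E : Type*} [NormedAddCommGroup E] [NormedSpace ℂ E]
    (F : E → ℂ) (y₀ : E) (hF : AnalyticAt ℂ F y₀) :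
    ∃ r : ℝ≥0, 0 < r ∧ ∃ T : ℝ≥0, ∀ᶠ y in 𝓝 y₀,
      (∀ k, ‖((k.factorial : ℂ)⁻¹ • iteratedFDeriv ℂ k F y)‖ * r ^ k ≤ T) ∧
      ∀ h : E, ‖h‖ < r → HasSum (fun k => ((k.factorial : ℂ)⁻¹ • iteratedFDeriv ℂ k F y) (fun _ => h))
        (F (y + h)) := by
  obtain ⟨p, R, hp⟩ := hF
  obtain ⟨s, hs0, hsR⟩ := ENNReal.lt_iff_exists_nnreal_btwn.1 hp.r_pos
  have hs0' : 0 < s := by exact_mod_cast hs0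
  set r := s / 2 with hrdef
  have hr0 : 0 < r := by positivity
  have hrr : (r + r : ℝ≥0∞) = s := by
    rw [← ENNReal.coe_add]; simp [hrdef]
  have hrR : (r + r : ℝ≥0∞) < R := by rw [hrr]; exact hsR
  obtain ⟨T, hT⟩ := aux_changeOrigin_bound p r (hrR.trans_le hp.r_le)
  refine ⟨r, hr0, T, ?_⟩
  filter_upwards [Metric.ball_mem_nhds y₀ (show (0:ℝ) < r by exact_mod_cast hr0)] with y hy
  rw [mem_ball_iff_norm] at hy
  have hy' : ‖y - y₀‖₊ ≤ r := by exact_mod_cast hy.le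
  have hyR : (‖y - y₀‖₊ : ℝ≥0∞) < R :=
    lt_of_le_of_lt (le_trans (by exact_mod_cast hy') le_self_add) hrR
  have hq := hp.changeOrigin hyR
  rw [add_sub_cancel] at hq
  constructor
  · intro k
    have h1 : ‖((k.factorial : ℂ)⁻¹ • iteratedFDeriv ℂ k F y)‖ ≤ ‖p.changeOrigin (y - y₀) k‖ := by
      refine ContinuousMultilinearMap.opNorm_le_bound (norm_nonneg _) fun v => ?_
      rw [smul_apply, hq.iteratedFDeriv_eq_sum_of_completeSpace, norm_smul]
      have : ‖∑ σ : Equiv.Perm (Fin k), p.changeOrigin (y - y₀) k (fun i => v (σ i))‖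
          ≤ ∑ σ : Equiv.Perm (Fin k), ‖p.changeOrigin (y - y₀) k‖ * ∏ i, ‖v i‖ := by
        refine (norm_sum_le _ _).trans (Finset.sum_le_sum fun σ _ => ?_)
        refine (ContinuousMultilinearMap.le_opNorm _ _).trans_eq ?_
        congr 1
        exact Equiv.prod_comp σ (fun i => ‖v i‖)
      simp only [Finset.sum_const, Finset.card_univ, Fintype.card_perm, Fintype.card_fin,
        nsmul_eq_mul] at this
      rw [norm_inv, Complex.norm_natCast, inv_mul_le_iff₀ (by positivity)]
      exact this
    have h2 : ‖p.changeOrigin (y - y₀) k‖ * r ^ k ≤ T := by exact_mod_cast hT _ hy' k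
    refine le_trans ?_ h2
    gcongr
  · intro h hh
    refine hq.hasSum_iteratedFDeriv ?_
    rw [mem_eball_zero_iff, enorm_eq_nnnorm]
    have hh' : ‖h‖₊ < r := by exact_mod_cast hh
    refine lt_tsub_iff_right.2 (lt_of_lt_of_le ?_ hrR.le)
    rw [← ENNReal.coe_add, ← ENNReal.coe_add]
    exact_mod_cast add_lt_add_of_lt_of_le hh' hy'

open Filter Topology NNReal ENNReal in
lemma aux_param {E : Type*} [NormedAddCommGroup E] [NormedSpace ℂ E]
    (F : E → ℂ) (γ : ℝ → E) (hγ : Continuous γ) (x₀ : E) (a b : ℝ)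
    (hF : ∀ t ∈ uIcc a b, AnalyticAt ℂ F (x₀ + γ t)) :
    AnalyticAt ℂ (fun x => ∫ t in a..b, F (x + γ t)) x₀ := by
  have hU : ∃ r : ℝ≥0, 0 < r ∧ ∃ T : ℝ≥0, ∀ t ∈ uIcc a b,
      (∀ k, ‖((k.factorial : ℂ)⁻¹ • iteratedFDeriv ℂ k F (x₀ + γ t))‖ * r ^ k ≤ T) ∧
      ∀ h : E, ‖h‖ < r → HasSum (fun k => ((k.factorial : ℂ)⁻¹ • iteratedFDeriv ℂ k F (x₀ + γ t))
        (fun _ => h)) (F (x₀ + γ t + h)) := by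
    refine isCompact_uIcc.induction_on (p := fun s => ∃ r : ℝ≥0, 0 < r ∧ ∃ T : ℝ≥0, ∀ t ∈ s,
      (∀ k, ‖((k.factorial : ℂ)⁻¹ • iteratedFDeriv ℂ k F (x₀ + γ t))‖ * r ^ k ≤ T) ∧
      ∀ h : E, ‖h‖ < r → HasSum (fun k => ((k.factorial : ℂ)⁻¹ • iteratedFDeriv ℂ k F (x₀ + γ t))
        (fun _ => h)) (F (x₀ + γ t + h))) ⟨1, one_pos, 0, by simp⟩ ?_ ?_ ?_
    · rintro s t hst ⟨r, hr, T, h⟩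
      exact ⟨r, hr, T, fun u hu => h u (hst hu)⟩
    · rintro s t ⟨r, hr, T, h⟩ ⟨r', hr', T', h'⟩
      refine ⟨min r r', lt_min hr hr', max T T', ?_⟩
      rintro u (hu | hu)
      · refine ⟨fun k => ((h u hu).1 k |> le_trans ?_).trans (by simp), fun v hv =>
          (h u hu).2 v (hv.trans_le (by simp))⟩
        gcongr; simp
      · refine ⟨fun k => ((h' u hu).1 k |> le_trans ?_).trans (by simp), fun v hv =>
          (h' u hu).2 v (hv.trans_le (by simp))⟩
        gcongr; simp
    · intro t ht
      obtain ⟨r, hr, T, h⟩ := aux_uniform_taylor F _ (hF t ht)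
      have hc : Continuous fun t => x₀ + γ t := by fun_prop
      have := (hc.tendsto t).eventually h
      exact ⟨_, mem_nhdsWithin_of_mem_nhds this, r, hr, T, fun u hu => hu⟩
  obtain ⟨r, hr, T, h⟩ := hU
  let c : ∀ k : ℕ, ℝ → ContinuousMultilinearMap ℂ (fun _ : Fin k => E) ℂ :=
    fun k t => ((k.factorial : ℂ)⁻¹ • iteratedFDeriv ℂ k F (x₀ + γ t))
  have hcc : ∀ k, ContinuousOn (c k) (uIcc a b) := by
    intro k t ht
    have hA : AnalyticOnNhd ℂ (iteratedFDeriv ℂ k F) {y | AnalyticAt ℂ F y} :=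
      AnalyticOnNhd.iteratedFDeriv (fun y hy => hy) k
    have h1 := (hA _ (hF t ht)).continuousAt
    have hc : Continuous fun t => x₀ + γ t := by fun_prop
    exact ((ContinuousAt.comp (f := fun t => x₀ + γ t) h1 hc.continuousAt).const_smul
      ((k.factorial : ℂ)⁻¹)).continuousWithinAt
  have hci : ∀ k, IntervalIntegrable (c k) MeasureTheory.volume a b :=
    fun k => (hcc k).intervalIntegrable
  let Q : FormalMultilinearSeries ℂ E ℂ := fun k => ∫ t in a..b, c k t
  have hbd : ∀ k, ∀ t ∈ uIcc a b, ‖c k t‖ ≤ T / r ^ k := by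
    intro k t ht
    rw [le_div_iff₀ (by positivity)]
    exact (h t ht).1 k
  have hQ : ∀ k, ‖Q k‖ * r ^ k ≤ T * |b - a| := by
    intro k
    have := intervalIntegral.norm_integral_le_of_norm_le_const (f := c k) (a := a) (b := b)
      (C := T / r ^ k) (fun t ht => hbd k t (uIoc_subset_uIcc ht))
    calc ‖Q k‖ * r ^ k ≤ (T / r ^ k * |b - a|) * r ^ k := by gcongr
      _ = T * |b - a| := by field_simp
  refine ⟨Q, r, ?_, by exact_mod_cast hr, ?_⟩
  · exact Q.le_radius_of_bound _ hQ
  · intro y hy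
    rw [mem_eball_zero_iff, enorm_eq_nnnorm] at hy
    have hy : ‖y‖ < r := by exact_mod_cast hy
    have hQa : ∀ k, Q k (fun _ => y) = ∫ t in a..b, c k t (fun _ => y) := by
      intro k
      exact (ContinuousLinearMap.intervalIntegral_comp_comm
        (ContinuousMultilinearMap.apply ℂ (fun _ : Fin k => E) ℂ (fun _ => y)) (hci k)).symm
    simp only [hQa]
    have hρ : ‖y‖ / r < 1 := by rw [div_lt_one (by exact_mod_cast hr)]; exact hy
    refine intervalIntegral.hasSum_integral_of_dominated_convergence
      (fun k _ => T * (‖y‖ / r) ^ k) ?_ ?_ ?_ ?_ ?_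
    · intro k
      have : IntervalIntegrable (fun t => c k t (fun _ => y)) MeasureTheory.volume a b := by
        apply ContinuousOn.intervalIntegrable
        exact (ContinuousMultilinearMap.apply ℂ (fun _ : Fin k => E) ℂ
          (fun _ => y)).continuous.comp_continuousOn (hcc k)
      exact this.def'.aestronglyMeasurable
    · intro k
      refine Eventually.of_forall fun t ht => ?_
      refine (ContinuousMultilinearMap.le_opNorm _ _).trans ?_
      have := hbd k t (uIoc_subset_uIcc ht)
      simp only [Finset.prod_const, Finset.card_univ, Fintype.card_fin]
      calc ‖c k t‖ * ‖y‖ ^ k ≤ T / r ^ k * ‖y‖ ^ k := by gcongr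
        _ = T * (‖y‖ / r) ^ k := by rw [div_pow]; ring
    · exact Eventually.of_forall fun t ht =>
        (summable_geometric_of_lt_one (by positivity) hρ).mul_left _
    · exact intervalIntegrable_const
    · refine Eventually.of_forall fun t ht => ?_
      have := (h t (uIoc_subset_uIcc ht)).2 y hy
      rwa [add_right_comm] at this

open Filter Topology in
lemma aux_freq (θ : ℝ) :
    ∃ᶠ ζ : ℂ in 𝓝 0, ζ ≠ 0 ∧ ζ = (‖ζ‖ : ℂ) * Complex.exp (θ * Complex.I) := by
  have ht : Tendsto (fun s : ℝ => (s : ℂ) * Complex.exp (θ * Complex.I)) (𝓝[>] 0) (𝓝 0) := by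
    have : Continuous (fun s : ℝ => (s : ℂ) * Complex.exp (θ * Complex.I)) := by fun_prop
    have := this.tendsto 0
    simp only [ofReal_zero, zero_mul] at this
    exact this.mono_left nhdsWithin_le_nhds
  refine ht.frequently (Eventually.frequently ?_)
  filter_upwards [self_mem_nhdsWithin] with s hs
  have hs : 0 < s := hs
  refine ⟨mul_ne_zero (by exact_mod_cast hs.ne') (exp_ne_zero _), ?_⟩
  rw [norm_mul, Complex.norm_exp_ofReal_mul_I, Complex.norm_real, Real.norm_of_nonneg hs.le, mul_one]

open Filter Topology in
/-- one variable division -/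
lemma aux_onevar (θ : ℝ) (r : ℝ) (hr : 0 < r) (g φ : ℂ → ℂ) (n : ℕ)
    (hg : AnalyticOnNhd ℂ g (Metric.closedBall 0 r)) (hφ : AnalyticOnNhd ℂ φ (Metric.closedBall 0 r))
    (hgs : ∀ z ∈ Metric.sphere (0 : ℂ) r, g z ≠ 0) (M : ℝ)
    (hM : ∀ w ∈ Metric.closedBall (0 : ℂ) r, ∀ᶠ z in 𝓝 w,
      g z ≠ 0 → g z = (‖g z‖ : ℂ) * Complex.exp (θ * Complex.I) → ‖φ z‖ ≤ M * ‖g z‖ ^ n) :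
    φ 0 = Real.circleAverage (fun z => φ z / g z ^ n) 0 r * g 0 ^ n := by
  set B := Metric.closedBall (0 : ℂ) r with hB
  have hBc : IsPreconnected B := (convex_closedBall 0 r).isPreconnected
  have hrB : (r : ℂ) ∈ B := by simp [hB, abs_of_pos hr]
  have hrS : (r : ℂ) ∈ Metric.sphere (0 : ℂ) r := by simp [abs_of_pos hr]
  have hnz : ∀ w ∈ B, ¬ g =ᶠ[𝓝 w] 0 := fun w hw h0 =>
    hgs _ hrS (hg.eqOn_zero_of_preconnected_of_eventuallyEq_zero hBc hw h0 hrB)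
  set k : ℂ → ℂ := fun z => φ z / g z ^ n with hk
  have hmer : MeromorphicOn k B := fun w hw =>
    (hφ w hw).meromorphicAt.div ((hg w hw).meromorphicAt.pow n)
  have hord : ∀ w ∈ B, 0 ≤ meromorphicOrderAt k w := by
    intro w hw
    by_cases hgw : g w = 0
    · by_contra! hlt
      have ht := tendsto_cobounded_of_meromorphicOrderAt_neg hlt
      have hop := (hg w hw).eventually_constant_or_nhds_le_map_nhds.resolve_left (by
        rw [hgw]; exact hnz w hw)
      rw [hgw] at hop
      have hf : ∃ᶠ z in 𝓝 w, g z ≠ 0 ∧ g z = (‖g z‖ : ℂ) * Complex.exp (θ * Complex.I) :=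
        (aux_freq θ).filter_mono hop
      have hf2 : ∃ᶠ z in 𝓝[≠] w, ‖k z‖ ≤ M := by
        rw [frequently_nhdsWithin_iff]
        refine (hf.and_eventually (hM w hw)).mono ?_
        rintro z ⟨⟨h1, h2⟩, h3⟩
        refine ⟨?_, fun h => h1 (by rw [h, hgw])⟩
        rw [hk]; simp only [norm_div, norm_pow]
        rw [div_le_iff₀ (by positivity)]
        exact h3 h1 h2
      have ht' := (tendsto_norm_cobounded_atTop.comp ht).eventually_gt_atTop M
      obtain ⟨z, h1, h2⟩ := (hf2.and_eventually ht').exists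
      exact absurd h1 (not_le.2 h2)
    · exact ((hφ w hw).div ((hg w hw).pow n) (pow_ne_zero _ hgw)).meromorphicOrderAt_nonneg
  set h := toMeromorphicNFOn k B with hh
  have hA : ∀ w ∈ B, AnalyticAt ℂ h w := fun w hw => by
    have := meromorphicNFOn_toMeromorphicNFOn k B hw
    rw [← this.meromorphicOrderAt_nonneg_iff_analyticAt, meromorphicOrderAt_toMeromorphicNFOn hmer hw]
    exact hord w hw
  have heq : ∀ w ∈ B, φ w = h w * g w ^ n := by
    intro w hw
    have h1 := hmer.toMeromorphicNFOn_eq_self_on_nhdsNE hw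
    have h2 := ((hg w hw).eventually_eq_zero_or_eventually_ne_zero).resolve_left (hnz w hw)
    have h3 : φ =ᶠ[𝓝[≠] w] fun z => h z * g z ^ n := by
      filter_upwards [h1, h2] with z h1 h2
      rw [hh, h1]; simp [hk, h2]
    have h4 : ContinuousAt (fun z => h z * g z ^ n) w :=
      ((hA w hw).mul ((hg w hw).pow n)).continuousAt
    exact tendsto_nhds_unique (((hφ w hw).continuousAt.tendsto.mono_left nhdsWithin_le_nhds).congr' h3)
      (h4.tendsto.mono_left nhdsWithin_le_nhds)
  have hav : Real.circleAverage k 0 r = h 0 := by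
    rw [Real.circleAverage_congr_sphere (f₂ := h)]
    · refine circleAverage_of_differentiable_on_off_countable countable_empty ?_ ?_
      · rw [abs_of_pos hr]; exact fun z hz => (hA z hz).continuousAt.continuousWithinAt
      · rw [abs_of_pos hr]; exact fun z hz => (hA z (Metric.ball_subset_closedBall hz.1)).differentiableAt
    · rw [abs_of_pos hr]
      intro z hz
      have := heq z (Metric.sphere_subset_closedBall hz)
      simp [hk, this, hgs z hz]
  rw [hav]
  exact heq 0 (by simp [hB, hr.le])

open Filter Topology in
lemma aux_local {E : Type*} [NormedAddCommGroup E] [NormedSpace ℂ E] (D : Set E) (hD : IsOpen D)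
    (P : E → ℂ) (hP : AnalyticOnNhd ℂ P D) (x₀ : E) (hx : x₀ ∈ D) (hfr : ∃ᶠ y in 𝓝 x₀, P y ≠ 0) :
    ∃ K : ℝ, 0 < K ∧ ∃ v : E, ∃ r : ℝ, 0 < r ∧ ∀ᶠ x in 𝓝 x₀,
      (∀ z ∈ Metric.closedBall (0:ℂ) r, x + z • v ∈ D) ∧
      (∀ z ∈ Metric.sphere (0:ℂ) r, P (x + z • v) ≠ 0 ∧ ‖P (x + z • v)‖⁻¹ ≤ K) := by
  obtain ⟨ε, hε, hεD⟩ := Metric.isOpen_iff.1 hD x₀ hx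
  obtain ⟨y, hPy, hy⟩ := (hfr.and_eventually (Metric.ball_mem_nhds x₀ hε)).exists
  set v := y - x₀ with hv
  have hL : Continuous fun z : ℂ => x₀ + z • v := by fun_prop
  set W : Set ℂ := (fun z : ℂ => x₀ + z • v) ⁻¹' Metric.ball x₀ ε with hW
  have hWc : IsPreconnected W := by
    refine Convex.isPreconnected ?_
    intro z hz w hw a b ha hb hab
    have := convex_ball x₀ ε hz hw ha hb hab
    simp only [hW, mem_preimage]
    convert this using 1
    have hc : (a:ℂ) + b = 1 := by exact_mod_cast hab
    simp only [← Complex.coe_smul, smul_add, smul_smul, add_smul, smul_eq_mul]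
    have : x₀ = (a:ℂ) • x₀ + (b:ℂ) • x₀ := by rw [← add_smul, hc, one_smul]
    nth_rewrite 1 [this]
    abel
  have hg : AnalyticOnNhd ℂ (fun z : ℂ => P (x₀ + z • v)) W := by
    intro z hz
    have h1 : AnalyticAt ℂ (fun z : ℂ => x₀ + z • v) z := by fun_prop
    exact AnalyticAt.fun_comp (hP _ (hεD hz)) h1
  have h0W : (0:ℂ) ∈ W := by simp [hW, hε]
  have h1W : (1:ℂ) ∈ W := by simpa [hW, hv] using hy
  have hne : ∀ᶠ z in 𝓝[≠] (0:ℂ), P (x₀ + z • v) ≠ 0 := by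
    refine ((hg 0 h0W).eventually_eq_zero_or_eventually_ne_zero).resolve_left fun h0 => ?_
    have := hg.eqOn_zero_of_preconnected_of_eventuallyEq_zero hWc h0W h0 h1W
    simp [hv, hPy] at this
  have hWn : W ∈ 𝓝 (0:ℂ) := (Metric.isOpen_ball.preimage hL).mem_nhds h0W
  obtain ⟨δ, hδ, hδ'⟩ := Metric.eventually_nhds_iff.1 ((eventually_nhdsWithin_iff.1 hne).and hWn)
  set r := δ / 2 with hr
  have hr0 : 0 < r := by positivity
  have hin : ∀ z ∈ Metric.closedBall (0:ℂ) r, x₀ + z • v ∈ D := fun z hz =>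
    hεD (hδ' (lt_of_le_of_lt hz (by rw [hr]; linarith))).2
  have hns : ∀ z ∈ Metric.sphere (0:ℂ) r, P (x₀ + z • v) ≠ 0 := fun z hz =>
    (hδ' (lt_of_le_of_lt (Metric.sphere_subset_closedBall hz) (by rw [hr]; linarith))).1
      (Metric.ne_of_mem_sphere hz hr0.ne')
  have hS := isCompact_sphere (0:ℂ) r
  have hcont : ContinuousOn (fun z => ‖P (x₀ + z • v)‖⁻¹) (Metric.sphere (0:ℂ) r) := by
    intro z hz
    refine ContinuousAt.continuousWithinAt ?_
    refine ContinuousAt.inv₀ (ContinuousAt.norm ?_) (norm_ne_zero_iff.2 (hns z hz))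
    exact ContinuousAt.comp (f := fun z : ℂ => x₀ + z • v)
      (hP _ (hin z (Metric.sphere_subset_closedBall hz))).continuousAt hL.continuousAt
  obtain ⟨K, hK⟩ := hS.bddAbove_image hcont
  have hK' : ∀ z ∈ Metric.sphere (0:ℂ) r, ‖P (x₀ + z • v)‖⁻¹ ≤ K := fun z hz =>
    hK (mem_image_of_mem _ hz)
  have hL2 : Continuous fun p : E × ℂ => p.1 + p.2 • v := by fun_prop
  refine ⟨|K| + 1, by positivity, v, r, hr0, ?_⟩
  refine Eventually.and ?_ ?_
  · refine (isCompact_closedBall (0:ℂ) r).eventually_forall_of_forall_eventually fun z hz => ?_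
    exact hL2.continuousAt.eventually (hD.mem_nhds (hin z hz))
  · refine hS.eventually_forall_of_forall_eventually fun z hz => ?_
    have hc : ContinuousAt (fun p : E × ℂ => P (p.1 + p.2 • v)) (x₀, z) :=
      ContinuousAt.comp (f := fun p : E × ℂ => p.1 + p.2 • v) (x := (x₀, z))
        (hP _ (hin z (Metric.sphere_subset_closedBall hz))).continuousAt hL2.continuousAt
    have h1 := hc.eventually_ne (hns z hz)
    have hi : ContinuousAt (fun p : E × ℂ => ‖P (p.1 + p.2 • v)‖⁻¹) (x₀, z) :=
      hc.norm.inv₀ (norm_ne_zero_iff.2 (hns z hz))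
    have h2 := hi.eventually_lt_const (u := |K| + 1) (by
      have := hK' z hz; have := le_abs_self K; simp only; linarith)
    filter_upwards [h1, h2] with p h1 h2 using ⟨h1, h2.le⟩

open Filter Topology in
lemma aux_eq_of_frequently {E : Type*} [TopologicalSpace E] (Q₁ Q₂ : E → ℂ) (x : E)
    (h1 : ContinuousAt Q₁ x) (h2 : ContinuousAt Q₂ x) (h : ∃ᶠ y in 𝓝 x, Q₁ y = Q₂ y) :
    Q₁ x = Q₂ x := by
  by_contra hne
  have hc : ContinuousAt (fun y => Q₁ y - Q₂ y) x := h1.sub h2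
  have := hc.eventually_ne (sub_ne_zero.2 hne)
  obtain ⟨y, hy, hy'⟩ := (h.and_eventually this).exists
  exact hy' (sub_eq_zero.2 hy)

open Filter Topology in
lemma aux_glue {E : Type*} [NormedAddCommGroup E] [NormedSpace ℂ E] (D : Set E) (hD : IsOpen D)
    (f p : E → ℂ) (hp : ∀ x ∈ D, ∃ᶠ y in 𝓝 x, p y ≠ 0) (B : E → ℂ → Prop)
    (h : ∀ x ∈ D, ∃ Q : E → ℂ, AnalyticAt ℂ Q x ∧ (∀ᶠ y in 𝓝 x, f y = Q y * p y) ∧ B x (Q x)) :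
    ∃ q : E → ℂ, AnalyticOnNhd ℂ q D ∧ (∀ x ∈ D, f x = q x * p x) ∧ ∀ x ∈ D, B x (q x) := by
  choose! Q hQ hf hB using h
  refine ⟨fun x => Q x x, fun x hx => ?_, fun x hx => (hf x hx).self_of_nhds, hB⟩
  refine (hQ x hx).congr ?_
  filter_upwards [(hQ x hx).eventually_analyticAt, (hf x hx).eventually_nhds, hD.mem_nhds hx]
    with y h1 h2 hy
  refine aux_eq_of_frequently _ _ y h1.continuousAt (hQ y hy).continuousAt ?_
  refine ((hp y hy).and_eventually (h2.and (hf y hy))).mono ?_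
  rintro z ⟨hz, h3, h4⟩
  exact mul_right_cancel₀ hz (h3.symm.trans h4)

open Filter Topology in
/-- **Quantitative division by powers of an analytic function** (Lemma 2.3).
For domains `D' ⋐ D` and `P` holomorphic on `D`, not identically zero, there exists `K > 0`
such that for every `n` and every bounded holomorphic `f` on `D` with `f/P^n` bounded on the
argument level set `A = {x ∈ D : P x ≠ 0, arg (P x) = θ}`, the quotient `f/P^n` extends
holomorphically to `D'` with norm bound `K^n · sup_D |f|`. -/
theorem quantitative_division_by_powers
    (d : ℕ) (hd : 1 ≤ d) (D' D : Set (Fin d → ℂ))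
    (hD'open : IsOpen D') (hD'conn : IsConnected D')
    (hDopen : IsOpen D) (hDconn : IsConnected D)
    (hcl : closure D' ⊆ D) (hcompact : IsCompact (closure D'))
    (P : (Fin d → ℂ) → ℂ) (hP : AnalyticOnNhd ℂ P D)
    (hPne : ∃ x ∈ D, P x ≠ 0) (θ : ℝ) :
    ∃ K > 0, ∀ n : ℕ, ∀ f : (Fin d → ℂ) → ℂ,
      AnalyticOnNhd ℂ f D →
      (∃ C, ∀ x ∈ D, ‖f x‖ ≤ C) →
      (∃ M, ∀ x ∈ D, P x ≠ 0 →
        P x = (‖P x‖ : ℂ) * Complex.exp (θ * Complex.I) →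
        ‖f x‖ ≤ M * ‖P x‖ ^ n) →
      ∃ q : (Fin d → ℂ) → ℂ, AnalyticOnNhd ℂ q D' ∧
        (∀ x ∈ D', f x = q x * P x ^ n) ∧
        ∀ C, (∀ x ∈ D, ‖f x‖ ≤ C) →
          ∀ x ∈ D', ‖q x‖ ≤ K ^ n * C := by
  have hfr : ∀ x ∈ D, ∃ᶠ y in 𝓝 x, P y ≠ 0 := by
    intro x hx hnot
    obtain ⟨y, hy, hPy⟩ := hPne
    refine hPy (hP.eqOn_zero_of_preconnected_of_eventuallyEq_zero hDconn.isPreconnected hx ?_ hy)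
    filter_upwards [hnot] with z hz using not_not.1 hz
  have hK : ∃ K : ℝ, 0 < K ∧ ∀ x₀ ∈ closure D', ∃ v : Fin d → ℂ, ∃ r : ℝ, 0 < r ∧ ∀ᶠ x in 𝓝 x₀,
      (∀ z ∈ Metric.closedBall (0:ℂ) r, x + z • v ∈ D) ∧
      (∀ z ∈ Metric.sphere (0:ℂ) r, P (x + z • v) ≠ 0 ∧ ‖P (x + z • v)‖⁻¹ ≤ K) := by
    refine hcompact.induction_on (p := fun s => ∃ K : ℝ, 0 < K ∧ ∀ x₀ ∈ s,
      ∃ v : Fin d → ℂ, ∃ r : ℝ, 0 < r ∧ ∀ᶠ x in 𝓝 x₀,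
      (∀ z ∈ Metric.closedBall (0:ℂ) r, x + z • v ∈ D) ∧
      (∀ z ∈ Metric.sphere (0:ℂ) r, P (x + z • v) ≠ 0 ∧ ‖P (x + z • v)‖⁻¹ ≤ K))
      ⟨1, one_pos, by simp⟩ ?_ ?_ ?_
    · rintro s t hst ⟨K, hK, h⟩
      exact ⟨K, hK, fun x hx => h x (hst hx)⟩
    · rintro s t ⟨K, hK, h⟩ ⟨K', hK', h'⟩
      refine ⟨max K K', lt_max_of_lt_left hK, ?_⟩
      rintro x (hx | hx)
      · obtain ⟨v, r, hr, he⟩ := h x hx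
        exact ⟨v, r, hr, he.mono fun y hy => ⟨hy.1, fun z hz =>
          ⟨(hy.2 z hz).1, (hy.2 z hz).2.trans (le_max_left _ _)⟩⟩⟩
      · obtain ⟨v, r, hr, he⟩ := h' x hx
        exact ⟨v, r, hr, he.mono fun y hy => ⟨hy.1, fun z hz =>
          ⟨(hy.2 z hz).1, (hy.2 z hz).2.trans (le_max_right _ _)⟩⟩⟩
    · intro x hx
      obtain ⟨K, hK, v, r, hr, he⟩ := aux_local D hDopen P hP x (hcl hx) (hfr x (hcl hx))
      exact ⟨_, mem_nhdsWithin_of_mem_nhds he.eventually_nhds, K, hK,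
        fun y hy => ⟨v, r, hr, hy⟩⟩
  obtain ⟨K, hK0, hK⟩ := hK
  refine ⟨K, hK0, fun n f hf _ ⟨M, hM⟩ => ?_⟩
  have hD'D : D' ⊆ D := subset_closure.trans hcl
  obtain ⟨q, hq, hqf, hqB⟩ := aux_glue D' hD'open f (fun x => P x ^ n)
    (fun x hx => (hfr x (hD'D hx)).mono fun y hy => pow_ne_zero n hy)
    (fun _ w => ∀ C, (∀ x ∈ D, ‖f x‖ ≤ C) → ‖w‖ ≤ K ^ n * C) (by
      intro x₀ hx₀
      obtain ⟨v, r, hr, he⟩ := hK x₀ (subset_closure hx₀)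
      have hL : ∀ x : Fin d → ℂ, Continuous fun z : ℂ => x + z • v := fun x => by fun_prop
      have hLa : ∀ (x : Fin d → ℂ) z, AnalyticAt ℂ (fun z : ℂ => x + z • v) z :=
        fun x z => by fun_prop
      refine ⟨fun x => Real.circleAverage (fun z => f (x + z • v) / P (x + z • v) ^ n) 0 r,
        ?_, ?_, ?_⟩
      · have h0 := he.self_of_nhds
        have := aux_param (fun y => f y / P y ^ n) (fun t => circleMap 0 r t • v) (by fun_prop)
          x₀ 0 (2 * Real.pi) (fun t _ => by
            have h1 := circleMap_mem_sphere (0:ℂ) hr.le t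
            have h2 := h0.1 _ (Metric.sphere_subset_closedBall h1)
            exact (hf _ h2).div ((hP _ h2).pow n) (pow_ne_zero _ (h0.2 _ h1).1))
        simp only [Real.circleAverage, ← Complex.coe_smul]
        simp only [smul_eq_mul]
        exact analyticAt_const.mul this
      · filter_upwards [he] with x hx
        have := aux_onevar θ r hr (fun z => P (x + z • v)) (fun z => f (x + z • v)) n
          (fun z hz => AnalyticAt.fun_comp (hP _ (hx.1 z hz)) (hLa x z))
          (fun z hz => AnalyticAt.fun_comp (hf _ (hx.1 z hz)) (hLa x z))
          (fun z hz => (hx.2 z hz).1) M (fun w hw => by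
            filter_upwards [(hL x).continuousAt.eventually (hDopen.mem_nhds (hx.1 w hw))] with z hz
            exact hM _ hz)
        simpa using this
      · intro C hC
        have h0 := he.self_of_nhds
        beta_reduce
        rw [Real.circleAverage_def, norm_smul, norm_inv, Real.norm_of_nonneg Real.two_pi_pos.le,
          inv_mul_le_iff₀ Real.two_pi_pos]
        refine (intervalIntegral.norm_integral_le_of_norm_le_const (C := K ^ n * C) ?_).trans_eq ?_
        · intro t _
          have h1 := circleMap_mem_sphere (0:ℂ) hr.le t
          have h2 := h0.1 _ (Metric.sphere_subset_closedBall h1)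
          have h3 := (h0.2 _ h1).2
          have hfC := hC _ h2
          rw [norm_div, norm_pow, div_eq_inv_mul, ← inv_pow]
          gcongr
        · rw [sub_zero, abs_of_pos Real.two_pi_pos, mul_comm])
  exact ⟨q, hq, hqf, fun C hC x hx => hqB x hx C hC⟩
end
end

section
/- Generalized Weierstrass division for formal power series (Lemma 2.5): Let d ≥ 1, let ℓ be an injective linear form, and let P ∈ ℂ[[x_1,…,x_d]] be nonzero with zero constant term; let a ∈ ℕ^d be the ℓ-minimal exponent of P. Then for every g ∈ ℂ[[x_1,…,x_d]] there exist unique formal power series q and r with g = q·P + r such that the coefficient of x^β in r vanishes for every β ∈ a + ℕ^d. -/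
open Set Complex

noncomputable section

def wForm {d : ℕ} (ℓ : Fin d → ℝ) (β : Fin d →₀ ℕ) : ℝ := ∑ j, ℓ j * (β j : ℝ)

lemma wForm_add {d : ℕ} (ℓ : Fin d → ℝ) (β γ : Fin d →₀ ℕ) :
    wForm ℓ (β + γ) = wForm ℓ β + wForm ℓ γ := by
  simp [wForm, mul_add, Finset.sum_add_distrib]

lemma wForm_finite {d : ℕ} (ℓ : Fin d → ℝ) (hpos : ∀ j, 0 < ℓ j) (c : ℝ) :
    {u : Fin d →₀ ℕ | wForm ℓ u < c}.Finite := by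
  let N : Fin d →₀ ℕ := Finsupp.equivFunOnFinite.symm fun j => ⌈c / ℓ j⌉₊
  refine (Set.finite_Iic N).subset ?_
  intro u hu j
  have h1 : ℓ j * (u j : ℝ) ≤ wForm ℓ u :=
    Finset.single_le_sum (f := fun j => ℓ j * (u j : ℝ))
      (fun i _ => mul_nonneg (hpos i).le (Nat.cast_nonneg _)) (Finset.mem_univ j)
  have hu' : wForm ℓ u < c := hu
  have h2 : (u j : ℝ) ≤ c / ℓ j := by
    rw [le_div_iff₀ (hpos j)]
    linarith
  have h3 : (u j : ℝ) ≤ (⌈c / ℓ j⌉₊ : ℝ) := h2.trans (Nat.le_ceil _)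
  have h4 : u j ≤ ⌈c / ℓ j⌉₊ := by exact_mod_cast h3
  simpa [N] using h4

lemma wForm_wf {d : ℕ} (ℓ : Fin d → ℝ) (hpos : ∀ j, 0 < ℓ j) :
    WellFounded (fun u v : Fin d →₀ ℕ => wForm ℓ u < wForm ℓ v) := by
  refine Subrelation.wf (r := InvImage (· < ·)
    (fun u : Fin d →₀ ℕ => {w : Fin d →₀ ℕ | wForm ℓ w < wForm ℓ u}.ncard)) ?_
    (InvImage.wf _ Nat.lt_wfRel.wf)
  intro u v huv
  refine Set.ncard_lt_ncard ?_ (wForm_finite ℓ hpos _)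
  refine ⟨fun w hw => lt_trans hw huv, fun h => ?_⟩
  exact lt_irrefl (wForm ℓ u) (h huv)

open Classical in
lemma wCoeff_mul {d : ℕ} (ℓ : Fin d → ℝ)
    (P : MvPowerSeries (Fin d) ℂ) (a : Fin d →₀ ℕ)
    (hamin : ∀ β : Fin d →₀ ℕ, MvPowerSeries.coeff β P ≠ 0 → β ≠ a → wForm ℓ a < wForm ℓ β)
    (q : MvPowerSeries (Fin d) ℂ) (γ : Fin d →₀ ℕ) :
    MvPowerSeries.coeff (a + γ) (q * P) =
      MvPowerSeries.coeff γ q * MvPowerSeries.coeff a P +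
      ∑ p ∈ Finset.HasAntidiagonal.antidiagonal (a + γ), if wForm ℓ p.1 < wForm ℓ γ then
        MvPowerSeries.coeff p.1 q * MvPowerSeries.coeff p.2 P else 0 := by
  rw [MvPowerSeries.coeff_mul]
  have hmem : (γ, a) ∈ Finset.HasAntidiagonal.antidiagonal (a + γ) := by
    simp [add_comm]
  rw [← Finset.add_sum_erase _ _ hmem, ← Finset.add_sum_erase _ (fun p => if wForm ℓ p.1 < wForm ℓ γ then
        MvPowerSeries.coeff p.1 q * MvPowerSeries.coeff p.2 P else 0) hmem]
  simp only [lt_irrefl, if_false, zero_add]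
  congr 1
  refine Finset.sum_congr rfl fun p hp => ?_
  obtain ⟨hne, hp⟩ := Finset.mem_erase.1 hp
  have hp' := Finset.HasAntidiagonal.mem_antidiagonal.1 hp
  split_ifs with h
  · rfl
  · by_cases h0 : MvPowerSeries.coeff p.2 P = 0
    · simp [h0]
    · exfalso
      have hpa : p.2 ≠ a := by
        intro e
        apply hne
        rw [e, add_comm a γ] at hp'
        exact Prod.ext (add_right_cancel hp') e
      have h1 := hamin _ h0 hpa
      have h2 := congrArg (wForm ℓ) hp'
      rw [wForm_add, wForm_add] at h2
      apply h
      linarith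

/-- **Generalized Weierstrass division for formal power series** (Lemma 2.5).
Let `ℓ` be an injective linear form with positive coefficients, `P` a nonzero formal power
series with zero constant term and `ℓ`-minimal exponent `a`. Then every `g` can be written
uniquely as `g = q·P + r` where the coefficients of `r` vanish on `a + ℕ^d`. -/
theorem generalized_weierstrass_division_formal
    (d : ℕ) (hd : 1 ≤ d) (ℓ : Fin d → ℝ) (hℓpos : ∀ j, 0 < ℓ j)
    (hℓinj : Function.Injective fun β : Fin d →₀ ℕ => ∑ j, ℓ j * (β j : ℝ))
    (P : MvPowerSeries (Fin d) ℂ) (hP : P ≠ 0)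
    (hP0 : MvPowerSeries.constantCoeff P = 0)
    (a : Fin d →₀ ℕ)
    (ha : MvPowerSeries.coeff a P ≠ 0)
    (hamin : ∀ β : Fin d →₀ ℕ, MvPowerSeries.coeff β P ≠ 0 → β ≠ a →
      ∑ j, ℓ j * (a j : ℝ) < ∑ j, ℓ j * (β j : ℝ))
    (g : MvPowerSeries (Fin d) ℂ) :
    ∃! qr : MvPowerSeries (Fin d) ℂ × MvPowerSeries (Fin d) ℂ,
      g = qr.1 * P + qr.2 ∧
      ∀ β : Fin d →₀ ℕ, a ≤ β → MvPowerSeries.coeff β qr.2 = 0 := by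
  classical
  have hwf := wForm_wf ℓ hℓpos
  have key := wCoeff_mul ℓ P a hamin
  let F : (γ : Fin d →₀ ℕ) → ((u : Fin d →₀ ℕ) → wForm ℓ u < wForm ℓ γ → ℂ) → ℂ :=
    fun γ ih => (MvPowerSeries.coeff (a + γ) g -
      ∑ p ∈ Finset.HasAntidiagonal.antidiagonal (a + γ), if h : wForm ℓ p.1 < wForm ℓ γ then
        ih p.1 h * MvPowerSeries.coeff p.2 P else 0) / MvPowerSeries.coeff a P
  let q : MvPowerSeries (Fin d) ℂ := fun γ => hwf.fix F γ
  have hq : ∀ γ, MvPowerSeries.coeff γ q = (MvPowerSeries.coeff (a + γ) g -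
      ∑ p ∈ Finset.HasAntidiagonal.antidiagonal (a + γ), if wForm ℓ p.1 < wForm ℓ γ then
        MvPowerSeries.coeff p.1 q * MvPowerSeries.coeff p.2 P else 0) /
          MvPowerSeries.coeff a P := by
    intro γ
    have h := hwf.fix_eq F γ
    exact h.trans (by simp only [F, dite_eq_ite]; rfl)
  have hqP : ∀ γ, MvPowerSeries.coeff (a + γ) (q * P) = MvPowerSeries.coeff (a + γ) g := by
    intro γ
    rw [key, hq γ, div_mul_cancel₀ _ ha]
    ring
  refine ⟨(q, g - q * P), ⟨by simp, ?_⟩, ?_⟩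
  · intro β hβ
    obtain ⟨γ, rfl⟩ := exists_add_of_le hβ
    simp [hqP]
  · rintro ⟨q', r'⟩ ⟨h1, h2⟩
    simp only at h1 h2
    have hq' : ∀ γ, MvPowerSeries.coeff (a + γ) (q' * P) = MvPowerSeries.coeff (a + γ) g := by
      intro γ
      rw [h1, map_add, h2 _ le_self_add, add_zero]
    have hall : ∀ γ, MvPowerSeries.coeff γ q' = MvPowerSeries.coeff γ q := by
      intro γ
      induction γ using hwf.induction with
      | _ γ ih =>
        have e := (hq' γ).trans (hqP γ).symm
        rw [key, key] at e
        have hs : (∑ p ∈ Finset.HasAntidiagonal.antidiagonal (a + γ), if wForm ℓ p.1 < wForm ℓ γ then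
            MvPowerSeries.coeff p.1 q' * MvPowerSeries.coeff p.2 P else 0) =
            ∑ p ∈ Finset.HasAntidiagonal.antidiagonal (a + γ), if wForm ℓ p.1 < wForm ℓ γ then
            MvPowerSeries.coeff p.1 q * MvPowerSeries.coeff p.2 P else 0 := by
          refine Finset.sum_congr rfl fun p _ => ?_
          split_ifs with h
          · rw [ih _ h]
          · rfl
        rw [hs] at e
        exact mul_right_cancel₀ ha (add_right_cancel e)
    have hqq : q' = q := MvPowerSeries.ext hall
    refine Prod.ext hqq ?_
    simp only
    rw [h1, hqq]
    ring
end
end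

section
/- Unique P-adic expansion of formal power series (Corollary 2.6): Let d ≥ 1, ℓ an injective linear form, P ∈ ℂ[[x_1,…,x_d]] nonzero with zero constant term, and a ∈ ℕ^d its ℓ-minimal exponent. Then for every f ∈ ℂ[[x_1,…,x_d]] there exists a unique sequence (g_n)_{n∈ℕ} of formal power series such that for every n the coefficient of x^β in g_n vanishes for all β ∈ a + ℕ^d, and for every N ∈ ℕ the difference f − Σ_{n<N} g_n·P^n lies in the ideal generated by P^N (so that f = Σ_{n=0}^∞ g_n·P^n in the m-adic topology). -/
open Set Complex

noncomputable section

namespace PadicAux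

/-- the value of the linear form -/
def lin {d : ℕ} (ℓ : Fin d → ℝ) (β : Fin d →₀ ℕ) : ℝ := ∑ j, ℓ j * (β j : ℝ)

lemma lin_add {d : ℕ} (ℓ : Fin d → ℝ) (β γ : Fin d →₀ ℕ) :
    lin ℓ (β + γ) = lin ℓ β + lin ℓ γ := by
  simp [lin, mul_add, Finset.sum_add_distrib]

lemma lin_wf {d : ℕ} (ℓ : Fin d → ℝ) (hℓ : ∀ j, 0 < ℓ j) :
    WellFounded (fun β γ : Fin d →₀ ℕ => lin ℓ β < lin ℓ γ) := by
  have : IsStrictOrder (Fin d →₀ ℕ) (fun β γ : Fin d →₀ ℕ => lin ℓ β < lin ℓ γ) :=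
    { irrefl := fun x => lt_irrefl _
      trans := fun x y z h1 h2 => lt_trans h1 h2 }
  rw [RelEmbedding.wellFounded_iff_isEmpty]
  refine ⟨fun F => ?_⟩
  obtain ⟨m, n, hmn, hle⟩ := wellQuasiOrdered_le (fun n => F n)
  have h1 : lin ℓ (F n) < lin ℓ (F m) := F.map_rel_iff.2 hmn
  have h2 : lin ℓ (F m) ≤ lin ℓ (F n) := by
    unfold lin
    refine Finset.sum_le_sum fun j _ => mul_le_mul_of_nonneg_left ?_ (hℓ j).le
    exact_mod_cast hle j
  exact absurd h1 (not_lt.2 h2)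

lemma coeff_formula {d : ℕ} (ℓ : Fin d → ℝ)
    (P : MvPowerSeries (Fin d) ℂ) (a : Fin d →₀ ℕ)
    (hamin : ∀ β : Fin d →₀ ℕ, MvPowerSeries.coeff β P ≠ 0 → β ≠ a → lin ℓ a < lin ℓ β)
    (q : MvPowerSeries (Fin d) ℂ) (γ : Fin d →₀ ℕ) :
    MvPowerSeries.coeff (a + γ) (q * P) =
      MvPowerSeries.coeff γ q * MvPowerSeries.coeff a P +
      ∑ p ∈ Finset.HasAntidiagonal.antidiagonal (a + γ), if lin ℓ p.1 < lin ℓ γ then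
        MvPowerSeries.coeff p.1 q * MvPowerSeries.coeff p.2 P else 0 := by
  classical
  have hmem : (γ, a) ∈ Finset.HasAntidiagonal.antidiagonal (a + γ) := by
    rw [Finset.HasAntidiagonal.mem_antidiagonal, add_comm]
  rw [MvPowerSeries.coeff_mul, ← Finset.add_sum_erase _ _ hmem,
    ← Finset.add_sum_erase (a := (γ, a)) (Finset.HasAntidiagonal.antidiagonal (a + γ)) (fun p => if lin ℓ p.1 < lin ℓ γ then
        MvPowerSeries.coeff p.1 q * MvPowerSeries.coeff p.2 P else 0) hmem]
  simp only [lt_irrefl, if_false, zero_add]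
  congr 1
  refine Finset.sum_congr rfl fun p hp => ?_
  rw [Finset.mem_erase, Finset.HasAntidiagonal.mem_antidiagonal] at hp
  obtain ⟨hne, hs⟩ := hp
  split_ifs with h
  · rfl
  · have : MvPowerSeries.coeff p.2 P = 0 := by
      by_contra h0
      have hpa : p.2 ≠ a := by
        intro e
        apply hne
        rw [e, add_comm] at hs
        exact Prod.ext (add_left_cancel hs) e
      have h1 := hamin _ h0 hpa
      have h2 := congrArg (lin ℓ) hs
      rw [lin_add, lin_add] at h2
      exact h (by linarith)
    rw [this, mul_zero]

lemma div_exists {d : ℕ} (ℓ : Fin d → ℝ) (hℓ : ∀ j, 0 < ℓ j)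
    (P : MvPowerSeries (Fin d) ℂ) (a : Fin d →₀ ℕ)
    (ha : MvPowerSeries.coeff a P ≠ 0)
    (hamin : ∀ β : Fin d →₀ ℕ, MvPowerSeries.coeff β P ≠ 0 → β ≠ a → lin ℓ a < lin ℓ β)
    (f : MvPowerSeries (Fin d) ℂ) :
    ∃ q : MvPowerSeries (Fin d) ℂ, ∀ β : Fin d →₀ ℕ, a ≤ β →
      MvPowerSeries.coeff β (f - q * P) = 0 := by
  classical
  let F : (γ : Fin d →₀ ℕ) → ((u : Fin d →₀ ℕ) → lin ℓ u < lin ℓ γ → ℂ) → ℂ := fun γ r =>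
    (MvPowerSeries.coeff (a + γ) f - ∑ p ∈ Finset.HasAntidiagonal.antidiagonal (a + γ),
      if h : lin ℓ p.1 < lin ℓ γ then r p.1 h * MvPowerSeries.coeff p.2 P else 0) /
      MvPowerSeries.coeff a P
  let q : MvPowerSeries (Fin d) ℂ := (lin_wf ℓ hℓ).fix F
  have hq : ∀ γ, MvPowerSeries.coeff γ q = F γ (fun u _ => MvPowerSeries.coeff u q) :=
    fun γ => (lin_wf ℓ hℓ).fix_eq F γ
  refine ⟨q, fun β hβ => ?_⟩
  obtain ⟨γ, rfl⟩ := exists_add_of_le hβ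
  rw [map_sub, coeff_formula ℓ P a hamin, hq γ]
  simp only [F, dite_eq_ite]
  rw [div_mul_cancel₀ _ ha]
  ring

lemma div_unique {d : ℕ} (ℓ : Fin d → ℝ) (hℓ : ∀ j, 0 < ℓ j)
    (P : MvPowerSeries (Fin d) ℂ) (a : Fin d →₀ ℕ)
    (ha : MvPowerSeries.coeff a P ≠ 0)
    (hamin : ∀ β : Fin d →₀ ℕ, MvPowerSeries.coeff β P ≠ 0 → β ≠ a → lin ℓ a < lin ℓ β)
    (q : MvPowerSeries (Fin d) ℂ)
    (h : ∀ β : Fin d →₀ ℕ, a ≤ β → MvPowerSeries.coeff β (q * P) = 0) : q = 0 := by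
  ext γ
  rw [map_zero]
  induction γ using (lin_wf ℓ hℓ).induction with
  | _ γ ih =>
    have h1 := h (a + γ) (le_add_of_nonneg_right zero_le)
    rw [coeff_formula ℓ P a hamin, Finset.sum_eq_zero, add_zero] at h1
    · exact (mul_eq_zero.1 h1).resolve_right ha
    · intro p _
      split_ifs with hp
      · rw [ih _ hp, zero_mul]
      · rfl

end PadicAux

/-- **Unique P-adic expansion of formal power series** (Corollary 2.6).
With `ℓ`, `P`, `a` as in the generalized Weierstrass division, every formal power series
`f` can be written uniquely as `f = Σ g_n·P^n` where the coefficients of each `g_n` vanish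
on `a + ℕ^d`; the partial-sum condition says `f − Σ_{n<N} g_n·P^n` lies in the ideal `(P^N)`. -/
theorem unique_P_adic_expansion_formal
    (d : ℕ) (hd : 1 ≤ d) (ℓ : Fin d → ℝ) (hℓpos : ∀ j, 0 < ℓ j)
    (hℓinj : Function.Injective fun β : Fin d →₀ ℕ => ∑ j, ℓ j * (β j : ℝ))
    (P : MvPowerSeries (Fin d) ℂ) (hP : P ≠ 0)
    (hP0 : MvPowerSeries.constantCoeff P = 0)
    (a : Fin d →₀ ℕ)
    (ha : MvPowerSeries.coeff a P ≠ 0)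
    (hamin : ∀ β : Fin d →₀ ℕ, MvPowerSeries.coeff β P ≠ 0 → β ≠ a →
      ∑ j, ℓ j * (a j : ℝ) < ∑ j, ℓ j * (β j : ℝ))
    (f : MvPowerSeries (Fin d) ℂ) :
    ∃! g : ℕ → MvPowerSeries (Fin d) ℂ,
      (∀ n : ℕ, ∀ β : Fin d →₀ ℕ, a ≤ β → MvPowerSeries.coeff β (g n) = 0) ∧
      (∀ N : ℕ, ∃ q : MvPowerSeries (Fin d) ℂ,
        f - ∑ n ∈ Finset.range N, g n * P ^ n = q * P ^ N) := by
  have hamin' : ∀ β : Fin d →₀ ℕ, MvPowerSeries.coeff β P ≠ 0 → β ≠ a →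
    PadicAux.lin ℓ a < PadicAux.lin ℓ β := hamin
  choose Q hQ using PadicAux.div_exists ℓ hℓpos P a ha hamin'
  refine ⟨fun n => Q^[n] f - Q (Q^[n] f) * P, ⟨fun n => hQ _, fun N => ⟨Q^[N] f, ?_⟩⟩, ?_⟩
  · induction N with
    | zero => simp
    | succ N ih =>
      rw [Finset.sum_range_succ, ← sub_sub, ih, Function.iterate_succ_apply']
      ring
  · suffices H : ∀ g g' : ℕ → MvPowerSeries (Fin d) ℂ,
        ((∀ n : ℕ, ∀ β : Fin d →₀ ℕ, a ≤ β → MvPowerSeries.coeff β (g n) = 0) ∧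
        (∀ N : ℕ, ∃ q : MvPowerSeries (Fin d) ℂ,
          f - ∑ n ∈ Finset.range N, g n * P ^ n = q * P ^ N)) →
        ((∀ n : ℕ, ∀ β : Fin d →₀ ℕ, a ≤ β → MvPowerSeries.coeff β (g' n) = 0) ∧
        (∀ N : ℕ, ∃ q : MvPowerSeries (Fin d) ℂ,
          f - ∑ n ∈ Finset.range N, g' n * P ^ n = q * P ^ N)) → g = g' by
      intro g hg
      refine H _ _ hg ⟨fun n => hQ _, fun N => ⟨Q^[N] f, ?_⟩⟩
      induction N with
      | zero => simp
      | succ N ih =>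
        rw [Finset.sum_range_succ, ← sub_sub, ih, Function.iterate_succ_apply']
        ring
    rintro g g' ⟨h1, h2⟩ ⟨h1', h2'⟩
    funext n
    induction n using Nat.strong_induction_on with
    | _ n ih =>
      obtain ⟨q, hq⟩ := h2 (n + 1)
      obtain ⟨q', hq'⟩ := h2' (n + 1)
      have hs : ∑ k ∈ Finset.range n, g k * P ^ k = ∑ k ∈ Finset.range n, g' k * P ^ k :=
        Finset.sum_congr rfl fun k hk => by rw [ih k (Finset.mem_range.1 hk)]
      rw [Finset.sum_range_succ] at hq hq'
      rw [hs] at hq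
      have e : (g n - g' n) * P ^ n = ((q' - q) * P) * P ^ n := by
        linear_combination hq' - hq
      have e' := mul_right_cancel₀ (pow_ne_zero n hP) e
      have h0 : q' - q = 0 := PadicAux.div_unique ℓ hℓpos P a ha hamin' _ fun β hβ => by
        rw [← e', map_sub, h1 n β hβ, h1' n β hβ, sub_zero]
      rw [h0, zero_mul] at e'
      exact sub_eq_zero.1 e'
end
end

section
/- Weierstrass division for bounded holomorphic functions (Lemma 2.7): Let d ≥ 1, let ℓ be an injective linear form with coefficients ℓ_1,…,ℓ_d > 0, and let P be holomorphic in a neighborhood of 0 ∈ ℂ^d, not identically zero, with P(0) = 0; let a ∈ ℕ^d be the ℓ-minimal exponent of the Taylor series of P at 0. For s > 0 set D_s = {x ∈ ℂ^d : |x_j| < s^{ℓ_j} for all j}. Then there exists s_0 > 0 such that for every 0 < s ≤ s_0 and every bounded holomorphic g on D_s there exist unique bounded holomorphic functions q and r on D_s with g = q·P + r and ∂^β r(0) = 0 for every β ∈ a + ℕ^d; moreover there is a constant C = C(s) with sup_{D_s}|q| ≤ C·sup_{D_s}|g| and sup_{D_s}|r| ≤ C·sup_{D_s}|g|. -/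
open Set Complex

noncomputable section

/-- The weighted polydisk `D_s = {x : |x_j| < s^{ℓ_j}}`. -/
def weightedPolydisk (d : ℕ) (ℓ : Fin d → ℝ) (s : ℝ) : Set (Fin d → ℂ) :=
  {x | ∀ j, ‖x j‖ < s ^ (ℓ j)}

/-- Partial derivative in the `j`-th coordinate direction. -/
def pderivCoord {d : ℕ} (j : Fin d) (f : (Fin d → ℂ) → ℂ) : (Fin d → ℂ) → ℂ :=
  fun x => fderiv ℂ f x (Pi.single j 1)

/-- Mixed partial derivative `∂^β = ∂^{β_1}_{x_1} ⋯ ∂^{β_d}_{x_d}`. -/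
def mixedPartial {d : ℕ} (β : Fin d → ℕ) (f : (Fin d → ℂ) → ℂ) : (Fin d → ℂ) → ℂ :=
  (List.finRange d).foldr (fun j g => (pderivCoord j)^[β j] g) f

theorem hs_congr {ι : Type*} {f g : ι → ℂ} {a b : ℂ} (h : HasSum f a) (hfg : ∀ i, g i = f i)
    (hab : b = a) : HasSum g b := by
  rw [hab, funext hfg]; exact h

def pd {d : ℕ} (ρ : Fin d → ℝ) : Set (Fin d → ℂ) := {x | ∀ j, ‖x j‖ < ρ j}

def HasCoef {d : ℕ} (ρ : Fin d → ℝ) (f : (Fin d → ℂ) → ℂ) (c : (Fin d → ℕ) → ℂ) : Prop :=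
  ∀ x ∈ pd ρ, HasSum (fun β : Fin d → ℕ => c β * ∏ j, x j ^ β j) (f x)

theorem isOpen_pd {d : ℕ} (ρ : Fin d → ℝ) : IsOpen (pd ρ) := by
  have : pd ρ = ⋂ j, {x : Fin d → ℂ | ‖x j‖ < ρ j} := by
    ext x; simp [pd]
  rw [this]
  exact isOpen_iInter_of_finite fun j => isOpen_lt (by fun_prop) continuous_const

theorem zero_mem_pd {d : ℕ} {ρ : Fin d → ℝ} (hρ : ∀ j, 0 < ρ j) : (0 : Fin d → ℂ) ∈ pd ρ := by
  intro j; simpa using hρ j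

theorem summable_geom : ∀ (d : ℕ) (t : Fin d → ℝ), (∀ j, 0 ≤ t j) → (∀ j, t j < 1) →
    Summable fun β : Fin d → ℕ => ∏ j, t j ^ β j := by
  intro d
  induction d with
  | zero => intro t _ _; exact (hasSum_fintype _).summable
  | succ d ih =>
    intro t h0 h1
    have h := (summable_geometric_of_lt_one (h0 0) (h1 0)).mul_of_nonneg
      (ih (fun j => t j.succ) (fun j => h0 _) (fun j => h1 _))
      (fun n => pow_nonneg (h0 0) n)
      (fun β => Finset.prod_nonneg fun j _ => pow_nonneg (h0 _) _)
    rw [← (Fin.consEquiv (fun _ : Fin (d+1) => ℕ)).summable_iff]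
    refine h.congr fun p => ?_
    simp [Fin.prod_univ_succ, Fin.consEquiv]

theorem summable_of_bound {d : ℕ} {ρ : Fin d → ℝ} (hρ : ∀ j, 0 < ρ j)
    {c : (Fin d → ℕ) → ℂ} {M : ℝ}
    (hc : ∀ β, ‖c β‖ * ∏ j, ρ j ^ β j ≤ M) {x : Fin d → ℂ} (hx : x ∈ pd ρ) :
    Summable fun β : Fin d → ℕ => ‖c β * ∏ j, x j ^ β j‖ := by
  have h := (summable_geom d (fun j => ‖x j‖ / ρ j) (fun j => div_nonneg (norm_nonneg _) (hρ j).le)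
    (fun j => (div_lt_one (hρ j)).2 (hx j))).mul_left M
  refine Summable.of_nonneg_of_le (fun _ => norm_nonneg _) (fun β => ?_) h
  have hp : 0 < ∏ j, ρ j ^ β j := Finset.prod_pos fun j _ => pow_pos (hρ j) _
  have : ∏ j, (‖x j‖ / ρ j) ^ β j = (∏ j, ‖x j‖ ^ β j) / ∏ j, ρ j ^ β j := by
    simp [div_pow, Finset.prod_div_distrib]
  simp only [this, norm_mul, norm_prod, norm_pow]
  rw [← mul_div_assoc, le_div_iff₀ hp]
  calc _ = (‖c β‖ * ∏ j, ρ j ^ β j) * ∏ j, ‖x j‖ ^ β j := by ring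
    _ ≤ _ := mul_le_mul_of_nonneg_right (hc β)
      (Finset.prod_nonneg fun j _ => pow_nonneg (norm_nonneg _) _)

theorem analytic_pderiv {d : ℕ} {ρ : Fin d → ℝ} {f : (Fin d → ℂ) → ℂ} (j : Fin d)
    (hf : AnalyticOnNhd ℂ f (pd ρ)) : AnalyticOnNhd ℂ (pderivCoord j f) (pd ρ) := by
  intro x hx
  have := (hf.fderiv x hx)
  exact ((ContinuousLinearMap.apply ℂ ℂ (Pi.single j (1:ℂ) : Fin d → ℂ)).analyticAt _).comp this

theorem analytic_pderiv_iter {d : ℕ} {ρ : Fin d → ℝ} {f : (Fin d → ℂ) → ℂ} (j : Fin d)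
    (hf : AnalyticOnNhd ℂ f (pd ρ)) (n : ℕ) :
    AnalyticOnNhd ℂ ((pderivCoord j)^[n] f) (pd ρ) := by
  induction n with
  | zero => exact hf
  | succ n ih => rw [Function.iterate_succ_apply']; exact analytic_pderiv j ih

theorem hasDerivAt_upd {d : ℕ} {f : (Fin d → ℂ) → ℂ} (j : Fin d) (y : Fin d → ℂ) (t : ℂ)
    (hf : DifferentiableAt ℂ f (Function.update y j t)) :
    HasDerivAt (fun t => f (Function.update y j t)) (pderivCoord j f (Function.update y j t)) t := by
  exact hf.hasFDerivAt.comp_hasDerivAt t (_root_.hasDerivAt_update y j t)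

theorem update_mem_pd {d : ℕ} {ρ : Fin d → ℝ} {y : Fin d → ℂ} (hy : y ∈ pd ρ) (j : Fin d) {t : ℂ}
    (ht : ‖t‖ < ρ j) : Function.update y j t ∈ pd ρ := by
  intro i
  by_cases h : i = j
  · subst h; simpa using ht
  · simpa [h] using hy i

theorem iteratedDeriv_slice {d : ℕ} {ρ : Fin d → ℝ} {f : (Fin d → ℂ) → ℂ} (j : Fin d)
    (hf : AnalyticOnNhd ℂ f (pd ρ)) {y : Fin d → ℂ} (hy : y ∈ pd ρ) (n : ℕ) :
    ∀ t : ℂ, ‖t‖ < ρ j → iteratedDeriv n (fun t => f (Function.update y j t)) t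
      = (pderivCoord j)^[n] f (Function.update y j t) := by
  induction n with
  | zero => intro t _; simp
  | succ n ih =>
    intro t ht
    rw [iteratedDeriv_succ, Function.iterate_succ_apply']
    have : iteratedDeriv n (fun t => f (Function.update y j t)) =ᶠ[nhds t]
        fun t => (pderivCoord j)^[n] f (Function.update y j t) := by
      filter_upwards [(isOpen_lt continuous_norm continuous_const).mem_nhds ht] with u hu
      exact ih u hu
    rw [this.deriv_eq]
    exact (hasDerivAt_upd j y t
      (analytic_pderiv_iter j hf n _ (update_mem_pd hy j ht)).differentiableAt).deriv

theorem differentiableOn_slice {d : ℕ} {ρ : Fin d → ℝ} {f : (Fin d → ℂ) → ℂ} (j : Fin d)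
    (hf : AnalyticOnNhd ℂ f (pd ρ)) {y : Fin d → ℂ} (hy : y ∈ pd ρ) :
    DifferentiableOn ℂ (fun t => f (Function.update y j t)) (Metric.ball 0 (ρ j)) := by
  intro t ht
  have ht' : ‖t‖ < ρ j := by simpa using ht
  exact (hasDerivAt_upd j y t
      (hf _ (update_mem_pd hy j ht')).differentiableAt).differentiableAt.differentiableWithinAt

theorem le_of_forall_radius {A M ρ : ℝ} {n : ℕ} (hρ : 0 < ρ)
    (h : ∀ R, 0 < R → R < ρ → A * R ^ n ≤ M) : A * ρ ^ n ≤ M := by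
  have ht : Filter.Tendsto (fun R : ℝ => A * R ^ n) (nhdsWithin ρ (Iio ρ)) (nhds (A * ρ ^ n)) :=
    (Continuous.tendsto (by fun_prop) ρ).mono_left nhdsWithin_le_nhds
  refine le_of_tendsto ht ?_
  filter_upwards [Ioo_mem_nhdsLT hρ] with R hR
  exact h R hR.1 hR.2

theorem exists_coef : ∀ (d : ℕ) (ρ : Fin d → ℝ) (_ : ∀ j, 0 < ρ j) (f : (Fin d → ℂ) → ℂ) (M : ℝ)
    (_ : AnalyticOnNhd ℂ f (pd ρ)) (_ : ∀ x ∈ pd ρ, ‖f x‖ ≤ M),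
    ∃ c, (∀ β, ‖c β‖ * ∏ j, ρ j ^ β j ≤ M) ∧ HasCoef ρ f c := by
  intro d
  induction d with
  | zero =>
    intro ρ hρ f M hf hM
    refine ⟨fun _ => f 0, fun β => by simpa using hM 0 (zero_mem_pd hρ), fun x hx => ?_⟩
    have : x = 0 := Subsingleton.elim _ _
    subst this
    simpa using hasSum_unique (fun β : Fin 0 → ℕ => f 0)
  | succ d ih =>
    intro ρ hρ f M hf hM
    set ρ' : Fin d → ℝ := fun j => ρ j.succ with hρ'
    have hmem : ∀ y ∈ pd ρ', (Fin.cons 0 y : Fin (d+1) → ℂ) ∈ pd ρ := by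
      intro y hy i
      refine Fin.cases ?_ (fun i => ?_) i
      · simpa using hρ 0
      · simpa using hy i
    have key : ∀ n : ℕ, ∃ c : (Fin d → ℕ) → ℂ,
        (∀ β, ‖c β‖ * ∏ j, ρ' j ^ β j ≤ M / ρ 0 ^ n) ∧
        HasCoef ρ' (fun y => (n.factorial : ℂ)⁻¹ * (pderivCoord 0)^[n] f (Fin.cons 0 y)) c := by
      intro n
      refine ih ρ' (fun j => hρ _) _ _ ?_ ?_
      · intro y hy
        refine analyticAt_const.mul ?_
        have h1 := analytic_pderiv_iter 0 hf n _ (hmem y hy)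
        have h2 : AnalyticAt ℂ (fun y : Fin d → ℂ => (Fin.cons 0 y : Fin (d+1) → ℂ)) y := by
          rw [analyticAt_pi_iff]
          intro i
          refine Fin.cases ?_ (fun i => ?_) i
          · simpa using analyticAt_const
          · simp only [Fin.cons_succ]
            exact (ContinuousLinearMap.proj (R := ℂ) (φ := fun _ : Fin d => ℂ) i).analyticAt y
        exact AnalyticAt.fun_comp h1 h2
      · intro y hy
        rw [le_div_iff₀ (pow_pos (hρ 0) _)]
        refine le_of_forall_radius (hρ 0) fun R hR hRρ => ?_
        have hd := differentiableOn_slice 0 hf (hmem y hy)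
        have h3 := Complex.norm_iteratedDeriv_le_of_forall_mem_sphere_norm_le (c := 0) (R := R) (C := M)
          n hR ((hd.mono (Metric.closedBall_subset_ball hRρ)).diffContOnCl_ball subset_rfl) (by
            intro z hz
            apply hM
            apply update_mem_pd (hmem y hy)
            simpa [mem_sphere_zero_iff_norm.1 hz] using hRρ)
        rw [iteratedDeriv_slice 0 hf (hmem y hy) n 0 (by simpa using hρ 0)] at h3
        have h4 : Function.update (Fin.cons 0 y : Fin (d+1) → ℂ) 0 0 = Fin.cons 0 y := by simp
        rw [h4] at h3
        have hfac : (0:ℝ) < n.factorial := by exact_mod_cast n.factorial_pos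
        rw [le_div_iff₀ (pow_pos hR _)] at h3
        rw [norm_mul, norm_inv, Complex.norm_natCast, mul_assoc, inv_mul_le_iff₀ hfac]
        exact h3
    choose c hc1 hc2 using key
    have hb : ∀ β : Fin (d+1) → ℕ, ‖c (β 0) (fun j => β j.succ)‖ * ∏ j, ρ j ^ β j ≤ M := by
      intro β
      have := hc1 (β 0) (fun j => β j.succ)
      rw [le_div_iff₀ (pow_pos (hρ 0) _)] at this
      rw [Fin.prod_univ_succ]
      calc _ = _ := by ring
        _ ≤ M := this
    refine ⟨fun β => c (β 0) (fun j => β j.succ), hb, fun x hx => ?_⟩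
    have hs := (summable_of_bound hρ hb hx).of_norm
    have hs' := hs
    rw [← (Fin.consEquiv (fun _ : Fin (d+1) => ℕ)).summable_iff] at hs'
    have hsum := hs'.hasSum
    have hx' : (fun j => x (Fin.succ j)) ∈ pd ρ' := fun j => hx _
    have hfib := hsum.prod_fiberwise (g := fun n => x 0 ^ n * ((n.factorial : ℂ)⁻¹ *
        (pderivCoord 0)^[n] f (Fin.cons 0 (fun j => x (Fin.succ j))))) (by
      intro n
      have := ((hc2 n) _ hx').mul_left (x 0 ^ n)
      refine hs_congr this (fun β => ?_) rfl
      simp only [Function.comp_apply, Fin.consEquiv, Equiv.coe_fn_mk, Fin.prod_univ_succ,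
        Fin.cons_zero, Fin.cons_succ]
      ring)
    have htay := Complex.hasSum_taylorSeries_on_ball (differentiableOn_slice 0 hf (hmem _ hx'))
      (z := x 0) (by simpa using hx 0)
    have e1 : Function.update (Fin.cons 0 (fun j => x (Fin.succ j)) : Fin (d+1) → ℂ) 0 (x 0) = x := by
      rw [Fin.update_cons_zero]; exact Fin.cons_self_tail x
    rw [e1] at htay
    have hEq : f x = _ := htay.unique (by
      convert hfib using 2 with n
      rw [iteratedDeriv_slice 0 hf (hmem _ hx') n 0 (by simpa using hρ 0)]
      rw [Fin.update_cons_zero, sub_zero, smul_eq_mul, smul_eq_mul]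
      ring)
    rw [hEq, ← (Fin.consEquiv (fun _ : Fin (d+1) => ℕ)).hasSum_iff]
    exact hsum

theorem exists_monoML (d n : ℕ) (β : Fin d → ℕ) :
    ∃ m : ContinuousMultilinearMap ℂ (fun _ : Fin n => (Fin d → ℂ)) ℂ,
      ∑ j, β j = n → (‖m‖ ≤ 1 ∧ ∀ x, m (fun _ => x) = ∏ j, x j ^ β j) := by
  by_cases h : ∑ j, β j = n
  swap
  · exact ⟨0, fun h' => absurd h' h⟩
  have e : Fin n ≃ Σ j : Fin d, Fin (β j) :=
    (Fintype.equivFinOfCardEq (by simp [h])).symm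
  refine ⟨(ContinuousMultilinearMap.mkPiAlgebra ℂ (Fin n) ℂ).compContinuousLinearMap
    (fun i => ContinuousLinearMap.proj (R := ℂ) (φ := fun _ : Fin d => ℂ) (e i).1), fun _ => ⟨?_, ?_⟩⟩
  · refine ContinuousMultilinearMap.opNorm_le_bound zero_le_one fun v => ?_
    simp only [ContinuousMultilinearMap.compContinuousLinearMap_apply,
      ContinuousMultilinearMap.mkPiAlgebra_apply, ContinuousLinearMap.proj_apply, norm_prod, one_mul]
    exact Finset.prod_le_prod (fun _ _ => norm_nonneg _) fun i _ => norm_le_pi_norm (v i) _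
  · intro x
    simp only [ContinuousMultilinearMap.compContinuousLinearMap_apply,
      ContinuousMultilinearMap.mkPiAlgebra_apply, ContinuousLinearMap.proj_apply]
    rw [e.prod_comp (fun s => x s.1), Fintype.prod_sigma]
    simp

theorem hasCoef_analytic_one {d : ℕ} {f : (Fin d → ℂ) → ℂ} {c : (Fin d → ℕ) → ℂ}
    (h : HasCoef (fun _ => 1) f c) : AnalyticOnNhd ℂ f (pd (fun _ => 1)) := by
  choose m hm using exists_monoML d
  let p : FormalMultilinearSeries ℂ (Fin d → ℂ) ℂ := fun n =>
    ∑ β ∈ Finset.piAntidiag Finset.univ n, c β • m n β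
  have hball : Metric.eball (0 : Fin d → ℂ) 1 = pd (fun _ => 1) := by
    ext x
    have : Metric.eball (0 : Fin d → ℂ) 1 = Metric.ball 0 1 := by
      rw [← Metric.eball_ofReal]; simp
    rw [this, mem_ball_zero_iff, pi_norm_lt_iff one_pos]; rfl
  have hp : HasFPowerSeriesOnBall f p 0 1 := by
    refine ⟨?_, one_pos, ?_⟩
    · refine ENNReal.le_of_forall_nnreal_lt fun r hr => ?_
      have hr1 : (r : ℝ) < 1 := by exact_mod_cast hr
      have hx : (fun _ : Fin d => ((r : ℝ) : ℂ)) ∈ pd (fun _ : Fin d => (1 : ℝ)) := by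
        intro j; simpa using hr1
      have hs := (h _ hx).summable.norm
      refine p.le_radius_of_bound (∑' β, ‖c β * ∏ j : Fin d, ((r : ℝ) : ℂ) ^ β j‖) fun n => ?_
      have h1 : ‖p n‖ ≤ ∑ β ∈ Finset.piAntidiag Finset.univ n, ‖c β‖ := by
        refine norm_sum_le_of_le _ fun β hβ => ?_
        have := (hm n β (by simpa using hβ)).1
        rw [norm_smul]
        exact mul_le_of_le_one_right (norm_nonneg _) this
      calc ‖p n‖ * (r : ℝ) ^ n ≤ (∑ β ∈ Finset.piAntidiag Finset.univ n, ‖c β‖) * (r : ℝ) ^ n := by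
            gcongr
        _ = ∑ β ∈ Finset.piAntidiag (Finset.univ : Finset (Fin d)) n,
              ‖c β * ∏ j : Fin d, ((r : ℝ) : ℂ) ^ β j‖ := by
            rw [Finset.sum_mul]
            refine Finset.sum_congr rfl fun β hβ => ?_
            have : ∑ j, β j = n := by simpa using hβ
            rw [Finset.prod_pow_eq_pow_sum, this]
            simp
        _ ≤ _ := hs.sum_le_tsum _ fun _ _ => norm_nonneg _
    · intro y hy
      rw [hball] at hy
      have hs := h y hy
      rw [← (Equiv.sigmaFiberEquiv (fun β : Fin d → ℕ => ∑ j, β j)).hasSum_iff] at hs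
      have h2 := hs.sigma (g := fun n => p n fun _ => y) (by
        intro n
        let e : {x // x ∈ Finset.piAntidiag (Finset.univ : Finset (Fin d)) n} ≃
          {β : Fin d → ℕ // ∑ j, β j = n} := Equiv.subtypeEquivRight (by intro x; simp)
        rw [← e.hasSum_iff]
        have h3 := Finset.hasSum (Finset.piAntidiag (Finset.univ : Finset (Fin d)) n)
          (fun β => c β * ∏ j, y j ^ β j)
        refine hs_congr h3 (fun i => rfl) ?_
        simp only [p, sum_apply]
        refine Finset.sum_congr rfl fun β hβ => ?_
        rw [smul_apply, (hm n β (by simpa using hβ)).2, smul_eq_mul])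
      simpa using h2
  rw [← hball]
  exact hp.analyticOnNhd

theorem HasCoef.analytic {d : ℕ} {ρ : Fin d → ℝ} (hρ : ∀ j, 0 < ρ j) {f : (Fin d → ℂ) → ℂ}
    {c : (Fin d → ℕ) → ℂ} (h : HasCoef ρ f c) : AnalyticOnNhd ℂ f (pd ρ) := by
  have h1 : HasCoef (fun _ => 1) (fun y => f (fun j => ρ j * y j))
      (fun β => c β * ∏ j, (ρ j : ℂ) ^ β j) := by
    intro y hy
    have hm : (fun j => (ρ j : ℂ) * y j) ∈ pd ρ := by
      intro j
      have := hy j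
      simp only [norm_mul, Complex.norm_real, Real.norm_eq_abs, abs_of_pos (hρ j)]
      exact mul_lt_of_lt_one_right (hρ j) this
    refine hs_congr (h _ hm) (fun β => ?_) rfl
    simp only [mul_pow, Finset.prod_mul_distrib, mul_assoc]
  have h2 := hasCoef_analytic_one h1
  intro x hx
  have hm : (fun j => (ρ j : ℂ)⁻¹ * x j) ∈ pd (fun _ : Fin d => (1 : ℝ)) := by
    intro j
    simp only [norm_mul, norm_inv, Complex.norm_real, Real.norm_eq_abs, abs_of_pos (hρ j)]
    rw [inv_mul_lt_iff₀ (hρ j), mul_one]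
    exact hx j
  have h3 := h2 _ hm
  have h4 : AnalyticAt ℂ (fun x : Fin d → ℂ => (fun j => (ρ j : ℂ)⁻¹ * x j)) x := by
    rw [analyticAt_pi_iff]
    intro j
    exact analyticAt_const.mul
      ((ContinuousLinearMap.proj (R := ℂ) (φ := fun _ : Fin d => ℂ) j).analyticAt x)
  have h5 := AnalyticAt.fun_comp h3 h4
  have : (fun x : Fin d → ℂ => f (fun j => (ρ j : ℂ) * ((ρ j : ℂ)⁻¹ * x j))) = f := by
    funext x
    congr 1
    funext j
    rw [mul_inv_cancel_left₀]
    exact_mod_cast (hρ j).ne'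
  rw [this] at h5
  exact h5

theorem prod_update {d : ℕ} (x : Fin d → ℂ) (j : Fin d) (t : ℂ) (β : Fin d → ℕ) :
    ∏ i, (Function.update x j t) i ^ β i = t ^ β j * ∏ i ∈ Finset.univ.erase j, x i ^ β i := by
  rw [← Finset.mul_prod_erase Finset.univ _ (Finset.mem_univ j)]
  congr 1
  · simp
  · refine Finset.prod_congr rfl fun i hi => ?_
    rw [Function.update_of_ne (Finset.ne_of_mem_erase hi)]

theorem HasCoef.pderiv {d : ℕ} {ρ : Fin d → ℝ} (hρ : ∀ j, 0 < ρ j) {f : (Fin d → ℂ) → ℂ}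
    {c : (Fin d → ℕ) → ℂ} (h : HasCoef ρ f c) (j : Fin d) :
    HasCoef ρ (pderivCoord j f) (fun β => ((β j : ℂ) + 1) * c (β + Pi.single j 1)) := by
  intro x hx
  let σ : Fin d → ℝ := fun i => (‖x i‖ + ρ i) / 2
  have hσ1 : ∀ i, ‖x i‖ < σ i := fun i => by have := hx i; simp only [σ]; linarith
  have hσ2 : ∀ i, σ i < ρ i := fun i => by have := hx i; simp only [σ]; linarith
  have hσ0 : ∀ i, 0 < σ i := fun i => (norm_nonneg _).trans_lt (hσ1 i)
  have hσm : (fun i => (σ i : ℂ)) ∈ pd ρ := by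
    intro i; simpa [abs_of_pos (hσ0 i)] using hσ2 i
  have hs := (h _ hσm).summable.norm
  have hder := Complex.hasSum_deriv_of_summable_norm (U := Metric.ball 0 (σ j)) (z := x j)
    (F := fun β t => c β * ∏ i, (Function.update x j t) i ^ β i) hs
    (fun β => by
      simp only [prod_update]
      fun_prop) Metric.isOpen_ball (by
      intro β w hw
      rw [norm_mul, norm_mul, norm_prod, norm_prod]
      gcongr with i
      rw [norm_pow, norm_pow]
      gcongr
      rw [Complex.norm_real, Real.norm_eq_abs, abs_of_pos (hσ0 i)]
      by_cases hi : i = j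
      · subst hi; simpa using (mem_ball_zero_iff.1 hw).le
      · simpa [hi] using (hσ1 i).le) (by simpa using hσ1 j)
  have hev : (fun w => ∑' β, c β * ∏ i, (Function.update x j w) i ^ β i) =ᶠ[nhds (x j)]
      fun w => f (Function.update x j w) := by
    filter_upwards [(isOpen_lt continuous_norm continuous_const).mem_nhds (hx j)] with w hw
    exact (h _ (update_mem_pd hx j hw)).tsum_eq
  have hupd : Function.update x j (x j) = x := by simp
  have hda := hasDerivAt_upd (f := f) j x (x j) (by
    rw [hupd]; exact (h.analytic hρ x hx).differentiableAt)
  rw [hev.deriv_eq, hda.deriv, hupd] at hder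
  have hinj : Function.Injective (fun β : Fin d → ℕ => β + Pi.single j 1) :=
    fun a b hab => add_right_cancel hab
  rw [← hinj.hasSum_iff] at hder
  · refine hs_congr hder (fun β => ?_) rfl
    simp only [Function.comp_apply, prod_update]
    rw [deriv_const_mul_field, deriv_mul_const_field]
    rw [deriv_pow_field]
    rw [← Finset.mul_prod_erase Finset.univ _ (Finset.mem_univ j)]
    have : ∏ i ∈ Finset.univ.erase j, x i ^ (β + Pi.single j 1 : Fin d → ℕ) i
        = ∏ i ∈ Finset.univ.erase j, x i ^ β i := by
      refine Finset.prod_congr rfl fun i hi => ?_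
      simp [Finset.ne_of_mem_erase hi]
    rw [this]
    simp
    ring
  · intro β hβ
    have hβ0 : β j = 0 := by
      by_contra hne
      apply hβ
      refine ⟨β - Pi.single j 1, ?_⟩
      funext i
      by_cases hi : i = j
      · subst hi; simp; omega
      · simp [hi]
    simp only [prod_update, hβ0, pow_zero]
    simp

theorem HasCoef.pderiv_iter {d : ℕ} {ρ : Fin d → ℝ} (hρ : ∀ j, 0 < ρ j) (j : Fin d) (n : ℕ) :
    ∃ w : (Fin d → ℕ) → ℂ, (∀ β, w β ≠ 0) ∧ ∀ f c, HasCoef ρ f c →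
      HasCoef ρ ((pderivCoord j)^[n] f) (fun β => w β * c (β + Pi.single j n)) := by
  induction n with
  | zero => exact ⟨fun _ => 1, fun _ => one_ne_zero, fun f c h => by simpa using h⟩
  | succ n ih =>
    obtain ⟨w, hw, H⟩ := ih
    refine ⟨fun β => ((β j : ℂ) + 1) * w (β + Pi.single j 1), fun β => mul_ne_zero ?_ (hw _), ?_⟩
    · exact Nat.cast_add_one_ne_zero _
    · intro f c h
      have := (H f c h).pderiv hρ j
      rw [Function.iterate_succ_apply']
      convert this using 2 with β
      rw [mul_assoc, add_assoc, ← Pi.single_add, add_comm n 1]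

theorem HasCoef.fold {d : ℕ} {ρ : Fin d → ℝ} (hρ : ∀ j, 0 < ρ j) (γ : Fin d → ℕ)
    (l : List (Fin d)) :
    ∃ w : (Fin d → ℕ) → ℂ, (∀ β, w β ≠ 0) ∧ ∀ f c, HasCoef ρ f c →
      HasCoef ρ (l.foldr (fun j g => (pderivCoord j)^[γ j] g) f)
        (fun β => w β * c (β + (l.map fun j => Pi.single j (γ j)).sum)) := by
  induction l with
  | nil => exact ⟨fun _ => 1, fun _ => one_ne_zero, fun f c h => by simpa using h⟩
  | cons j l ih =>
    obtain ⟨w, hw, H⟩ := ih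
    obtain ⟨w1, hw1, H1⟩ := HasCoef.pderiv_iter hρ j (γ j)
    refine ⟨fun β => w1 β * w (β + Pi.single j (γ j)), fun β => mul_ne_zero (hw1 _) (hw _), ?_⟩
    intro f c h
    have := H1 _ _ (H f c h)
    rw [List.foldr_cons]
    convert this using 2 with β
    rw [mul_assoc, List.map_cons, List.sum_cons, add_assoc]

theorem HasCoef.apply_zero {d : ℕ} {ρ : Fin d → ℝ} (hρ : ∀ j, 0 < ρ j) {f : (Fin d → ℂ) → ℂ}
    {c : (Fin d → ℕ) → ℂ} (h : HasCoef ρ f c) : f 0 = c 0 := by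
  have h1 := h 0 (zero_mem_pd hρ)
  refine h1.unique ?_
  refine hs_congr (hasSum_single 0 ?_) (fun _ => rfl) (by simp)
  intro β hβ
  obtain ⟨j, hj⟩ := Function.ne_iff.1 hβ
  rw [Finset.prod_eq_zero (Finset.mem_univ j), mul_zero]
  simpa using hj

theorem HasCoef.mixed {d : ℕ} {ρ : Fin d → ℝ} (hρ : ∀ j, 0 < ρ j) (γ : Fin d → ℕ) :
    ∃ w : ℂ, w ≠ 0 ∧ ∀ f c, HasCoef ρ f c → mixedPartial γ f 0 = w * c γ := by
  obtain ⟨w, hw, H⟩ := HasCoef.fold hρ γ (List.finRange d)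
  refine ⟨w 0, hw 0, fun f c h => ?_⟩
  have := (H f c h).apply_zero hρ
  rw [← Fin.sum_univ_def, Finset.univ_sum_single, zero_add] at this
  exact this

theorem HasCoef.unique {d : ℕ} {ρ : Fin d → ℝ} (hρ : ∀ j, 0 < ρ j) {f : (Fin d → ℂ) → ℂ}
    {c c' : (Fin d → ℕ) → ℂ} (h : HasCoef ρ f c) (h' : HasCoef ρ f c') : c = c' := by
  funext β
  obtain ⟨w, hw, H⟩ := HasCoef.mixed hρ β
  exact mul_left_cancel₀ hw ((H f c h).symm.trans (H f c' h'))

theorem HasCoef.mixed_eq_zero {d : ℕ} {ρ : Fin d → ℝ} (hρ : ∀ j, 0 < ρ j) {f : (Fin d → ℂ) → ℂ}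
    {c : (Fin d → ℕ) → ℂ} (h : HasCoef ρ f c) (β : Fin d → ℕ) :
    mixedPartial β f 0 = 0 ↔ c β = 0 := by
  obtain ⟨w, hw, H⟩ := HasCoef.mixed hρ β
  rw [H f c h]; simp [hw]

def Bdd {d : ℕ} (ρ : Fin d → ℝ) (f : (Fin d → ℂ) → ℂ) (M : ℝ) : Prop := ∀ x ∈ pd ρ, ‖f x‖ ≤ M

theorem Bdd.nonneg {d : ℕ} {ρ : Fin d → ℝ} (hρ : ∀ j, 0 < ρ j) {f : (Fin d → ℂ) → ℂ} {M : ℝ}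
    (h : Bdd ρ f M) : 0 ≤ M := (norm_nonneg _).trans (h 0 (zero_mem_pd hρ))

theorem HasCoef.bound {d : ℕ} {ρ : Fin d → ℝ} (hρ : ∀ j, 0 < ρ j) {f : (Fin d → ℂ) → ℂ}
    {c : (Fin d → ℕ) → ℂ} (h : HasCoef ρ f c) {M : ℝ} (hM : Bdd ρ f M) (β : Fin d → ℕ) :
    ‖c β‖ * ∏ j, ρ j ^ β j ≤ M := by
  obtain ⟨c', h1, h2⟩ := exists_coef d ρ hρ f M (h.analytic hρ) hM
  rw [h.unique hρ h2]
  exact h1 β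

theorem HasCoef.sub {d : ℕ} {ρ : Fin d → ℝ} {f g : (Fin d → ℂ) → ℂ}
    {c e : (Fin d → ℕ) → ℂ} (h : HasCoef ρ f c) (h' : HasCoef ρ g e) :
    HasCoef ρ (fun x => f x - g x) (fun β => c β - e β) := by
  intro x hx
  exact hs_congr ((h x hx).sub (h' x hx)) (fun β => by ring) rfl

theorem HasCoef.cmul {d : ℕ} {ρ : Fin d → ℝ} {f : (Fin d → ℂ) → ℂ}
    {c : (Fin d → ℕ) → ℂ} (h : HasCoef ρ f c) (k : ℂ) :
    HasCoef ρ (fun x => k * f x) (fun β => k * c β) := by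
  intro x hx
  exact hs_congr ((h x hx).mul_left k) (fun β => by ring) rfl

theorem HasCoef.congr {d : ℕ} {ρ : Fin d → ℝ} {f g : (Fin d → ℂ) → ℂ}
    {c : (Fin d → ℕ) → ℂ} (h : HasCoef ρ f c) (hfg : ∀ x ∈ pd ρ, g x = f x) : HasCoef ρ g c := by
  intro x hx
  rw [hfg x hx]; exact h x hx

theorem inj_add {d : ℕ} (a : Fin d → ℕ) :
    Function.Injective (fun β : Fin d → ℕ => β + a) := fun _ _ hab => add_right_cancel hab

theorem HasCoef.mul_mono {d : ℕ} {ρ : Fin d → ℝ} {f : (Fin d → ℂ) → ℂ}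
    {c : (Fin d → ℕ) → ℂ} (h : HasCoef ρ f c) (a : Fin d → ℕ) :
    HasCoef ρ (fun x => f x * ∏ j, x j ^ a j) (Function.extend (fun β => β + a) c 0) := by
  intro x hx
  rw [← (inj_add a).hasSum_iff]
  · refine hs_congr ((h x hx).mul_right (∏ j, x j ^ a j)) (fun β => ?_) rfl
    simp only [Function.comp_apply, Pi.add_apply, pow_add, Finset.prod_mul_distrib]
    rw [(inj_add a).extend_apply]
    ring
  · intro β hβ
    rw [Function.extend_apply' _ _ _ (fun ⟨b, hb⟩ => hβ ⟨b, hb⟩)]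
    simp

theorem shift_one {d : ℕ} {ρ : Fin d → ℝ} (hρ : ∀ j, 0 < ρ j) {f : (Fin d → ℂ) → ℂ}
    {c : (Fin d → ℕ) → ℂ} (h : HasCoef ρ f c) (hb : ∃ M, Bdd ρ f M) (j : Fin d) :
    ∃ g, HasCoef ρ g (fun β => c (β + Pi.single j 1)) ∧
      ∀ M, Bdd ρ f M → Bdd ρ g ((2 / ρ j) * M) := by
  obtain ⟨M₀, hM₀⟩ := hb
  have hcb : ∀ β : Fin d → ℕ, ‖c (β + Pi.single j 1)‖ * ∏ i, ρ i ^ β i ≤ M₀ / ρ j := by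
    intro β
    have := h.bound hρ hM₀ (β + Pi.single j 1)
    rw [le_div_iff₀ (hρ j)]
    refine le_trans (le_of_eq ?_) this
    simp only [Pi.add_apply, pow_add, Finset.prod_mul_distrib]
    have : ∏ i, ρ i ^ (Pi.single j 1 : Fin d → ℕ) i = ρ j := by
      rw [Finset.prod_eq_single j]
      · simp
      · intro i _ hi; simp [hi]
      · simp
    rw [this]; ring
  let g : (Fin d → ℂ) → ℂ := fun x => ∑' β : Fin d → ℕ, c (β + Pi.single j 1) * ∏ i, x i ^ β i
  have hg : HasCoef ρ g (fun β => c (β + Pi.single j 1)) := fun x hx =>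
    (summable_of_bound hρ hcb hx).of_norm.hasSum
  refine ⟨g, hg, fun M hM x hx => ?_⟩
  have hid : ∀ t : ℂ, ‖t‖ < ρ j → t * g (Function.update x j t) =
      f (Function.update x j t) - f (Function.update x j 0) := by
    intro t ht
    have h1 := (hg.mul_mono (Pi.single j 1)) _ (update_mem_pd hx j ht)
    have h0 := h _ (update_mem_pd hx j (t := 0) (by simpa using hρ j))
    have h2 := h _ (update_mem_pd hx j ht)
    have hp : ∏ i, (Function.update x j t) i ^ (Pi.single j 1 : Fin d → ℕ) i = t := by
      rw [Finset.prod_eq_single j]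
      · simp
      · intro i _ hi; simp [hi]
      · simp
    beta_reduce at h1
    rw [hp] at h1
    have h3 := h1.add h0
    have h4 := h2.unique (hs_congr h3 (fun β => ?_) rfl)
    · rw [h4]; ring
    · rw [prod_update, prod_update]
      by_cases hβ : β j = 0
      · rw [Function.extend_apply']
        · simp [hβ]
        · rintro ⟨b, rfl⟩
          simp at hβ
      · have : β = (β - Pi.single j 1) + Pi.single j 1 := by
          funext i
          by_cases hi : i = j
          · subst hi; simp; omega
          · simp [hi]
        have e := (inj_add (Pi.single j 1 : Fin d → ℕ)).extend_apply
          (fun β => c (β + Pi.single j 1)) 0 (β - Pi.single j 1)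
        simp only [← this] at e
        rw [e, zero_pow hβ]
        ring
  have hMn := hM.nonneg hρ
  have hd := differentiableOn_slice j (hg.analytic hρ) hx
  have hR : ∀ R, ‖x j‖ < R → R < ρ j → ‖g x‖ * R ^ 1 ≤ 2 * M := by
    intro R hR1 hR2
    have hR0 : 0 < R := (norm_nonneg _).trans_lt hR1
    have := Complex.norm_le_of_forall_mem_frontier_norm_le (C := 2 * M / R) (z := x j)
      (Metric.isBounded_ball (x := (0:ℂ)) (r := R))
      ((hd.mono (Metric.closedBall_subset_ball hR2)).diffContOnCl_ball subset_rfl)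
      (by
        intro z hz
        rw [frontier_ball _ hR0.ne', mem_sphere_zero_iff_norm] at hz
        have hz' : ‖z‖ < ρ j := by rw [hz]; exact hR2
        have h5 := hid z hz'
        rw [le_div_iff₀ hR0, ← hz, ← norm_mul, mul_comm, h5]
        refine (norm_sub_le _ _).trans ?_
        have := hM _ (update_mem_pd hx j hz')
        have := hM _ (update_mem_pd hx j (t := 0) (by simpa using hρ j))
        linarith)
      (subset_closure (by simpa using hR1))
    simp only [Function.update_eq_self] at this
    rw [le_div_iff₀ hR0] at this
    simpa using this
  have h6 : ‖g x‖ * ρ j ^ 1 ≤ 2 * M := by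
    refine le_of_forall_radius (hρ j) fun R h1 h2 => ?_
    refine le_trans ?_ (hR (max R ((‖x j‖ + ρ j) / 2)) ?_ ?_)
    · gcongr; exact le_max_left _ _
    · apply lt_max_of_lt_right; have := hx j; linarith
    · apply max_lt h2; have := hx j; linarith
  rw [pow_one, ← le_div_iff₀ (hρ j)] at h6
  refine h6.trans (le_of_eq (by ring))

theorem shift {d : ℕ} {ρ : Fin d → ℝ} (hρ : ∀ j, 0 < ρ j) (n : ℕ) :
    ∀ (a : Fin d → ℕ), ∑ j, a j = n → ∀ {f : (Fin d → ℂ) → ℂ}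
    {c : (Fin d → ℕ) → ℂ} (_ : HasCoef ρ f c) (_ : ∃ M, Bdd ρ f M),
    ∃ g, HasCoef ρ g (fun β => c (β + a)) ∧
      ∀ M, Bdd ρ f M → Bdd ρ g ((∏ j, (2 / ρ j) ^ a j) * M) := by
  induction n with
  | zero =>
    intro a ha f c h hb
    have : a = 0 := by
      funext j
      exact (Finset.sum_eq_zero_iff.1 ha) j (Finset.mem_univ j)
    subst this
    exact ⟨f, by simpa using h, fun M hM => by simpa using hM⟩
  | succ n ih =>
    intro a ha f c h hb
    obtain ⟨j, hj⟩ : ∃ j, a j ≠ 0 := by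
      by_contra hcon
      push Not at hcon
      simp [hcon] at ha
    obtain ⟨b, rfl⟩ : ∃ b : Fin d → ℕ, a = b + Pi.single j 1 := by
      refine ⟨a - Pi.single j 1, ?_⟩
      funext i
      by_cases hi : i = j
      · subst hi; simp; omega
      · simp [hi]
    have hbn : ∑ j, b j = n := by
      simp only [Pi.add_apply, Finset.sum_add_distrib] at ha
      simp at ha
      exact ha
    obtain ⟨g₁, h1, h2⟩ := ih b hbn h hb
    obtain ⟨g₂, h3, h4⟩ := shift_one hρ h1 ⟨_, h2 _ hb.choose_spec⟩ j
    refine ⟨g₂, ?_, fun M hM => ?_⟩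
    · convert h3 using 3 with β
      rw [add_assoc, add_comm b]
    · have := h4 _ (h2 M hM)
      convert this using 1
      simp only [Pi.add_apply, pow_add, Finset.prod_mul_distrib]
      have : ∏ i, (2 / ρ i) ^ (Pi.single j 1 : Fin d → ℕ) i = 2 / ρ j := by
        rw [Finset.prod_eq_single j]
        · simp
        · intro i _ hi; simp [hi]
        · simp
      rw [this]; ring

theorem hasCoef_tsum {d : ℕ} {ρ : Fin d → ℝ} (hρ : ∀ j, 0 < ρ j) {f : ℕ → (Fin d → ℂ) → ℂ}
    {c : ℕ → (Fin d → ℕ) → ℂ} (h : ∀ k, HasCoef ρ (f k) (c k)) {v : ℕ → ℝ}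
    (hv : ∀ k, Bdd ρ (f k) (v k)) (hs : Summable v) :
    HasCoef ρ (fun x => ∑' k, f k x) (fun β => ∑' k, c k β) ∧
    ∀ β, Summable fun k => c k β := by
  have hcs : ∀ β, Summable fun k => c k β := by
    intro β
    have hp : 0 < ∏ j, ρ j ^ β j := Finset.prod_pos fun j _ => pow_pos (hρ j) _
    refine Summable.of_norm_bounded (hs.mul_right (∏ j, ρ j ^ β j)⁻¹) fun k => ?_
    rw [← div_eq_mul_inv, le_div_iff₀ hp]
    exact (h k).bound hρ (hv k) β
  refine ⟨fun x hx => ?_, hcs⟩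
  have hgeo := summable_geom d (fun j => ‖x j‖ / ρ j)
    (fun j => div_nonneg (norm_nonneg _) (hρ j).le) (fun j => (div_lt_one (hρ j)).2 (hx j))
  have hprod := hs.mul_of_nonneg hgeo (fun k => (hv k).nonneg hρ)
    (fun β => Finset.prod_nonneg fun j _ => pow_nonneg (div_nonneg (norm_nonneg _) (hρ j).le) _)
  have hS : Summable fun p : ℕ × (Fin d → ℕ) => c p.1 p.2 * ∏ j, x j ^ p.2 j := by
    refine Summable.of_norm_bounded hprod fun p => ?_
    have hp : 0 < ∏ j, ρ j ^ p.2 j := Finset.prod_pos fun j _ => pow_pos (hρ j) _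
    have : ∏ j, (‖x j‖ / ρ j) ^ p.2 j = (∏ j, ‖x j‖ ^ p.2 j) / ∏ j, ρ j ^ p.2 j := by
      simp [div_pow, Finset.prod_div_distrib]
    simp only [this, norm_mul, norm_prod, norm_pow]
    rw [← mul_div_assoc, le_div_iff₀ hp]
    calc _ = (‖c p.1 p.2‖ * ∏ j, ρ j ^ p.2 j) * ∏ j, ‖x j‖ ^ p.2 j := by ring
      _ ≤ _ := mul_le_mul_of_nonneg_right ((h p.1).bound hρ (hv p.1) p.2)
        (Finset.prod_nonneg fun j _ => pow_nonneg (norm_nonneg _) _)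
  have h1 := hS.hasSum.prod_fiberwise (fun k => h k x hx)
  have h2 := hS.hasSum
  rw [← (Equiv.prodComm (Fin d → ℕ) ℕ).hasSum_iff] at h2
  have h3 := h2.prod_fiberwise (g := fun β => (∑' k, c k β) * ∏ j, x j ^ β j)
    (fun β => hs_congr ((hcs β).hasSum.mul_right (∏ j, x j ^ β j)) (fun _ => rfl) rfl)
  exact hs_congr h3 (fun _ => rfl) h1.tsum_eq

theorem exists_step {d : ℕ} {ρ : Fin d → ℝ} (hρ : ∀ j, 0 < ρ j)
    {P' : (Fin d → ℂ) → ℂ} (hP' : AnalyticOnNhd ℂ P' (pd ρ)) (a : Fin d → ℕ) {c0 : ℂ}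
    (hc0 : c0 ≠ 0) {H : ℝ} (hH : Bdd ρ P' H)
    (hθ : (∏ j, (2 / ρ j) ^ a j) * H ≤ ‖c0‖ / 2)
    (u : (Fin d → ℂ) → ℂ) (hu : AnalyticOnNhd ℂ u (pd ρ)) (hub : ∃ m, Bdd ρ u m) :
    ∃ u' : (Fin d → ℂ) → ℂ, AnalyticOnNhd ℂ u' (pd ρ) ∧
      (∀ e, HasCoef ρ (fun x => u x * P' x) e → HasCoef ρ u' (fun β => -c0⁻¹ * e (β + a))) ∧
      ∀ m, Bdd ρ u m → Bdd ρ u' (m / 2) := by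
  have hH0 := hH.nonneg hρ
  have hprod : ∀ m, Bdd ρ u m → Bdd ρ (fun x => u x * P' x) (m * H) := by
    intro m hm x hx
    rw [norm_mul]
    exact mul_le_mul (hm x hx) (hH x hx) (norm_nonneg _) (hm.nonneg hρ)
  obtain ⟨m₀, hm₀⟩ := hub
  obtain ⟨e, -, he⟩ := exists_coef d ρ hρ (fun x => u x * P' x) (m₀ * H)
    (fun x hx => (hu x hx).mul (hP' x hx)) (hprod m₀ hm₀)
  obtain ⟨g, hg1, hg2⟩ := shift hρ _ a rfl he ⟨_, hprod m₀ hm₀⟩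
  have hcoef := hg1.cmul (-c0⁻¹)
  refine ⟨fun x => -c0⁻¹ * g x, hcoef.analytic hρ, ?_, ?_⟩
  · intro e' he'
    rw [he'.unique hρ he]
    exact hcoef
  · intro m hm x hx
    have h1 := hg2 _ (hprod m hm) x hx
    have hc : 0 < ‖c0‖ := norm_pos_iff.2 hc0
    have hm0 := hm.nonneg hρ
    rw [norm_mul, norm_neg, norm_inv, inv_mul_le_iff₀ hc]
    calc ‖g x‖ ≤ _ := h1
      _ = m * ((∏ j, (2 / ρ j) ^ a j) * H) := by ring
      _ ≤ m * (‖c0‖ / 2) := by gcongr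
      _ = _ := by ring

theorem division_core {d : ℕ} {ρ : Fin d → ℝ} (hρ : ∀ j, 0 < ρ j)
    {P : (Fin d → ℂ) → ℂ} (hP : AnalyticOnNhd ℂ P (pd ρ)) (a : Fin d → ℕ) {c0 : ℂ}
    (hc0 : c0 ≠ 0) {H : ℝ} (hH : Bdd ρ (fun x => P x - c0 * ∏ j, x j ^ a j) H)
    (hθ : (∏ j, (2 / ρ j) ^ a j) * H ≤ ‖c0‖ / 2) :
    ∃ C > 0,
        ∀ g : (Fin d → ℂ) → ℂ, AnalyticOnNhd ℂ g (pd ρ) →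
          (∃ Mg, ∀ x ∈ pd ρ, ‖g x‖ ≤ Mg) →
          ∃ q r : (Fin d → ℂ) → ℂ,
            AnalyticOnNhd ℂ q (pd ρ) ∧
            AnalyticOnNhd ℂ r (pd ρ) ∧
            (∀ x ∈ pd ρ, g x = q x * P x + r x) ∧
            (∀ β : Fin d → ℕ, (∀ j, a j ≤ β j) → mixedPartial β r 0 = 0) ∧
            (∀ Mg : ℝ, (∀ x ∈ pd ρ, ‖g x‖ ≤ Mg) →
              (∀ x ∈ pd ρ, ‖q x‖ ≤ C * Mg) ∧
              (∀ x ∈ pd ρ, ‖r x‖ ≤ C * Mg)) ∧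
            (∀ q' r' : (Fin d → ℂ) → ℂ,
              AnalyticOnNhd ℂ q' (pd ρ) →
              AnalyticOnNhd ℂ r' (pd ρ) →
              (∃ M', ∀ x ∈ pd ρ,
                ‖q' x‖ ≤ M' ∧ ‖r' x‖ ≤ M') →
              (∀ x ∈ pd ρ, g x = q' x * P x + r' x) →
              (∀ β : Fin d → ℕ, (∀ j, a j ≤ β j) → mixedPartial β r' 0 = 0) →
              ∀ x ∈ pd ρ, q' x = q x ∧ r' x = r x) := by
  set P' : (Fin d → ℂ) → ℂ := fun x => P x - c0 * ∏ j, x j ^ a j with hP'def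
  have hP'a : AnalyticOnNhd ℂ P' (pd ρ) := by
    intro x hx
    refine (hP x hx).sub (analyticAt_const.mul ?_)
    refine Finset.analyticAt_fun_prod _ fun j _ => ?_
    exact ((ContinuousLinearMap.proj (R := ℂ) (φ := fun _ : Fin d => ℂ) j).analyticAt x).pow _
  have hPP' : ∀ x, P x = c0 * ∏ j, x j ^ a j + P' x := fun x => by simp [P']
  have hc : 0 < ‖c0‖ := norm_pos_iff.2 hc0
  have hH0 := hH.nonneg hρ
  set K : ℝ := ∏ j, (2 / ρ j) ^ a j with hK
  have hK0 : 0 < K := Finset.prod_pos fun j _ => pow_pos (div_pos two_pos (hρ j)) _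
  set B : ℝ := ‖c0‖ * ∏ j, ρ j ^ a j + H with hB
  have hR0 : 0 < ∏ j, ρ j ^ a j := Finset.prod_pos fun j _ => pow_pos (hρ j) _
  have hB0 : 0 ≤ B := by positivity
  have hPB : Bdd ρ P B := by
    intro x hx
    rw [hPP']
    refine (norm_add_le _ _).trans (add_le_add ?_ (hH x hx))
    rw [norm_mul, norm_prod]
    gcongr with j
    rw [norm_pow]
    gcongr
    exact (hx j).le
  let X := {u : (Fin d → ℂ) → ℂ // AnalyticOnNhd ℂ u (pd ρ) ∧ ∃ m, Bdd ρ u m}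
  have hstep : ∀ u : X, ∃ u' : X,
      (∀ e, HasCoef ρ (fun x => u.1 x * P' x) e → HasCoef ρ u'.1 (fun β => -c0⁻¹ * e (β + a))) ∧
      ∀ m, Bdd ρ u.1 m → Bdd ρ u'.1 (m / 2) := by
    intro u
    obtain ⟨u', h1, h2, h3⟩ := exists_step hρ hP'a a hc0 hH hθ u.1 u.2.1 u.2.2
    exact ⟨⟨u', h1, _, h3 _ u.2.2.choose_spec⟩, h2, h3⟩
  choose T hT1 hT2 using hstep
  set A : ℝ := ‖c0‖⁻¹ * K with hA
  have hA0 : 0 < A := by positivity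
  refine ⟨1 + 2 * A * (1 + B), by positivity, fun g hg hgb => ?_⟩
  obtain ⟨M₀, hM₀⟩ := hgb
  obtain ⟨G, -, hG⟩ := exists_coef d ρ hρ g M₀ hg hM₀
  obtain ⟨g₁, hg1, hg2⟩ := shift hρ _ a rfl hG ⟨M₀, hM₀⟩
  have hu0 := hg1.cmul c0⁻¹
  have hu0b : ∀ M, Bdd ρ g M → Bdd ρ (fun x => c0⁻¹ * g₁ x) (A * M) := by
    intro M hM x hx
    rw [norm_mul, norm_inv, hA, mul_assoc]
    gcongr
    exact hg2 M hM x hx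
  let u0 : X := ⟨fun x => c0⁻¹ * g₁ x, hu0.analytic hρ, _, hu0b M₀ hM₀⟩
  let u : ℕ → X := fun k => T^[k] u0
  have husucc : ∀ k, u (k+1) = T (u k) := fun k => Function.iterate_succ_apply' T k u0
  have hub : ∀ M, Bdd ρ g M → ∀ k, Bdd ρ (u k).1 ((A * M) * (1/2) ^ k) := by
    intro M hM k
    induction k with
    | zero => rw [pow_zero, mul_one]; exact hu0b M hM
    | succ k ih =>
      rw [husucc]
      convert hT2 _ _ ih using 1
      ring
  have hex : ∀ k, ∃ c, HasCoef ρ (u k).1 c := fun k => by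
    obtain ⟨c, -, h⟩ := exists_coef d ρ hρ (u k).1 _ (u k).2.1 (hub M₀ hM₀ k)
    exact ⟨c, h⟩
  choose cu hcu using hex
  have hPb : ∀ k, Bdd ρ (fun x => (u k).1 x * P' x) (((A * M₀) * (1/2) ^ k) * H) := by
    intro k x hx
    rw [norm_mul]
    exact mul_le_mul (hub M₀ hM₀ k x hx) (hH x hx) (norm_nonneg _) ((hub M₀ hM₀ k).nonneg hρ)
  have hex2 : ∀ k, ∃ c, HasCoef ρ (fun x => (u k).1 x * P' x) c := fun k => by
    obtain ⟨c, -, h⟩ := exists_coef d ρ hρ _ _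
      (fun x hx => ((u k).2.1 x hx).mul (hP'a x hx)) (hPb k)
    exact ⟨c, h⟩
  choose e he using hex2
  have hcu0 : ∀ β, cu 0 β = c0⁻¹ * G (β + a) := fun β => congrFun ((hcu 0).unique hρ hu0) β
  have hce : ∀ k β, cu (k+1) β = -c0⁻¹ * e k (β + a) := by
    intro k β
    have h1 := hT1 (u k) _ (he k)
    rw [← husucc] at h1
    exact congrFun ((hcu (k+1)).unique hρ h1) β
  have hgs : Summable fun k : ℕ => (A * M₀) * (1/2 : ℝ) ^ k := summable_geometric_two.mul_left _
  obtain ⟨hq, hqs⟩ := hasCoef_tsum hρ hcu (hub M₀ hM₀) hgs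
  obtain ⟨hqP, hes⟩ := hasCoef_tsum hρ he hPb (hgs.mul_right H)
  set q : (Fin d → ℂ) → ℂ := fun x => ∑' k, (u k).1 x with hqdef
  have hqP' : HasCoef ρ (fun x => q x * P' x) (fun β => ∑' k, e k β) := by
    refine hqP.congr fun x hx => ?_
    simp only [hqdef]
    rw [tsum_mul_right]
  have hr : HasCoef ρ (fun x => g x - q x * P x) _ :=
    ((hG.sub ((hq.mul_mono a).cmul c0)).sub hqP').congr (fun x hx => by
      rw [hPP' x]; ring)
  have hqb : ∀ M, Bdd ρ g M → Bdd ρ q (2 * A * M) := by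
    intro M hM x hx
    have h1 : HasSum (fun k : ℕ => (A * M) * (1/2 : ℝ) ^ k) ((A * M) * 2) :=
      hasSum_geometric_two.mul_left _
    have := tsum_of_norm_bounded h1 (fun k => hub M hM k x hx)
    refine this.trans (le_of_eq (by ring))
  have hrb : ∀ M, Bdd ρ g M → Bdd ρ (fun x => g x - q x * P x) (M + 2 * A * M * B) := by
    intro M hM x hx
    refine (norm_sub_le _ _).trans (add_le_add (hM x hx) ?_)
    rw [norm_mul]
    exact mul_le_mul (hqb M hM x hx) (hPB x hx) (norm_nonneg _) ((hqb M hM).nonneg hρ)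
  have hr0 : ∀ β : Fin d → ℕ, (∀ j, a j ≤ β j) →
      mixedPartial β (fun x => g x - q x * P x) 0 = 0 := by
    intro β hβ
    rw [hr.mixed_eq_zero hρ]
    obtain ⟨b, rfl⟩ : ∃ b, β = b + a := ⟨β - a, by
      funext j; have := hβ j; simp; omega⟩
    rw [(inj_add a).extend_apply, (hqs b).tsum_eq_zero_add, hcu0]
    have : ∑' k, e k (b + a) = - (c0 * ∑' k, cu (k+1) b) := by
      rw [← tsum_mul_left, ← tsum_neg]
      congr 1
      funext k
      rw [hce]
      field_simp
    rw [this, mul_add, mul_inv_cancel_left₀ hc0]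
    ring
  refine ⟨q, fun x => g x - q x * P x, hq.analytic hρ, hr.analytic hρ, fun x hx => by ring,
    hr0, ?_, ?_⟩
  · intro M hM
    have hM0 : 0 ≤ M := Bdd.nonneg hρ hM
    refine ⟨fun x hx => (hqb M hM x hx).trans ?_, fun x hx => (hrb M hM x hx).trans ?_⟩
    · have : 0 ≤ M * (1 + 2 * A * B) := by positivity
      nlinarith
    · have : 0 ≤ 2 * A * M := by positivity
      nlinarith
  · intro q' r' hq' hr' hb' hdiv hr'0
    obtain ⟨M', hM'⟩ := hb'
    obtain ⟨Q', -, hQ'⟩ := exists_coef d ρ hρ q' M' hq' (fun x hx => (hM' x hx).1)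
    obtain ⟨R', -, hR'⟩ := exists_coef d ρ hρ r' M' hr' (fun x hx => (hM' x hx).2)
    have hv := hQ'.sub hq
    have hvb : Bdd ρ (fun x => q' x - q x) (M' + 2 * A * M₀) := by
      intro x hx
      exact (norm_sub_le _ _).trans (add_le_add (hM' x hx).1 (hqb M₀ hM₀ x hx))
    let v : X := ⟨fun x => q' x - q x, hv.analytic hρ, _, hvb⟩
    have hvP := ((hr.sub hR').sub ((hv.mul_mono a).cmul c0)).congr
      (g := fun x => (q' x - q x) * P' x) (fun x hx => by
        have h1 := hdiv x hx
        have h2 := hPP' x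
        linear_combination -h1 - (q' x - q x) * h2)
    have h1 := hT1 v _ hvP
    have hTv : HasCoef ρ (T v).1 (fun β => Q' β - ∑' k, cu k β) := by
      convert h1 using 2 with β
      have e1 := (hr.mixed_eq_zero hρ (β + a)).1 (hr0 _ (fun j => by simp))
      have e2 := (hR'.mixed_eq_zero hρ (β + a)).1 (hr'0 _ (fun j => by simp))
      beta_reduce at e1
      rw [e1, e2, (inj_add a).extend_apply]
      field_simp
      ring
    have hTveq : ∀ x ∈ pd ρ, (T v).1 x = q' x - q x := fun x hx =>
      (hTv x hx).unique (hv x hx)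
    have hvn : ∀ n : ℕ, Bdd ρ v.1 ((M' + 2 * A * M₀) * (1/2) ^ n) := by
      intro n
      induction n with
      | zero => simpa using hvb
      | succ n ih =>
        intro x hx
        have := hT2 v _ ih x hx
        rw [hTveq x hx] at this
        exact this.trans (le_of_eq (by ring))
    have hq0 : ∀ x ∈ pd ρ, q' x = q x := by
      intro x hx
      have ht : Filter.Tendsto (fun n : ℕ => (M' + 2 * A * M₀) * (1/2 : ℝ) ^ n)
          Filter.atTop (nhds ((M' + 2 * A * M₀) * 0)) :=
        (tendsto_pow_atTop_nhds_zero_of_lt_one (by norm_num) (by norm_num)).const_mul _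
      have h3 := ge_of_tendsto' ht (fun n => hvn n x hx)
      rw [mul_zero] at h3
      exact sub_eq_zero.1 (norm_le_zero_iff.1 h3)
    intro x hx
    refine ⟨hq0 x hx, ?_⟩
    have := hdiv x hx
    rw [hq0 x hx] at this
    linear_combination -this

theorem small_bound {d : ℕ} (ℓ : Fin d → ℝ) (hℓpos : ∀ j, 0 < ℓ j)
    {r0 : ℝ} (hr0 : 0 < r0)
    {P : (Fin d → ℂ) → ℂ} (hP : AnalyticOnNhd ℂ P (polydisk d r0))
    (a : Fin d → ℕ)
    (ha : mixedPartial a P 0 ≠ 0)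
    (hamin : ∀ β : Fin d → ℕ, mixedPartial β P 0 ≠ 0 → β ≠ a →
      ∑ j, ℓ j * (a j : ℝ) < ∑ j, ℓ j * (β j : ℝ)) :
    ∃ s0 > 0, ∀ s : ℝ, 0 < s → s ≤ s0 → ∃ (c0 : ℂ) (Hb : ℝ), c0 ≠ 0 ∧
      weightedPolydisk d ℓ s ⊆ polydisk d r0 ∧
      Bdd (fun j => s ^ ℓ j) (fun x => P x - c0 * ∏ j, x j ^ a j) Hb ∧
      (∏ j, (2 / s ^ ℓ j) ^ a j) * Hb ≤ ‖c0‖ / 2 := by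
  have hr1 : 0 < r0 / 2 := by linarith
  have hρ1 : ∀ j : Fin d, 0 < (fun _ : Fin d => r0 / 2) j := fun _ => hr1
  have hsub1 : pd (fun _ : Fin d => r0 / 2) ⊆ polydisk d r0 := by
    intro x hx j
    have := hx j
    simp only at this
    linarith
  obtain ⟨M, hM⟩ : ∃ M, ∀ x ∈ pd (fun _ : Fin d => r0 / 2), ‖P x‖ ≤ M := by
    have hsub : Metric.closedBall (0 : Fin d → ℂ) (r0 / 2) ⊆ polydisk d r0 := by
      intro x hx j
      have h1 : ‖x‖ ≤ r0 / 2 := by simpa using hx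
      have h2 := norm_le_pi_norm x j
      linarith
    obtain ⟨M, hM⟩ := (isCompact_closedBall (0 : Fin d → ℂ) (r0 / 2)).exists_bound_of_continuousOn
      (hP.continuousOn.mono hsub)
    refine ⟨M, fun x hx => hM x ?_⟩
    rw [mem_closedBall_zero_iff, pi_norm_le_iff_of_nonneg hr1.le]
    exact fun j => (hx j).le
  obtain ⟨p, -, hp⟩ := exists_coef d _ hρ1 P M (hP.mono hsub1) hM
  have hpa : p a ≠ 0 := fun h => ha ((hp.mixed_eq_zero hρ1 a).2 h)
  set L : (Fin d → ℕ) → ℝ := fun β => ∑ j, ℓ j * (β j : ℝ) with hL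
  have hpmin : ∀ β, p β ≠ 0 → β ≠ a → L a < L β := fun β h1 h2 =>
    hamin β (fun h => h1 ((hp.mixed_eq_zero hρ1 β).1 h)) h2
  have hLs : ∀ s : ℝ, 0 < s → ∀ β : Fin d → ℕ, ∏ j, (s ^ ℓ j) ^ β j = s ^ L β := by
    intro s hs β
    rw [hL]
    simp only
    rw [Real.rpow_sum_of_pos hs]
    refine Finset.prod_congr rfl fun j _ => ?_
    rw [Real.rpow_mul hs.le, Real.rpow_natCast]
  set r2 : ℝ := r0 / 4 with hr2
  have hr2p : 0 < r2 := by positivity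
  have hy : (fun _ : Fin d => (r2 : ℂ)) ∈ pd (fun _ : Fin d => r0 / 2) := by
    intro j
    simp only [Complex.norm_real, Real.norm_eq_abs, abs_of_pos hr2p]
    rw [hr2]; linarith
  have hsum0 := (hp _ hy).summable.norm
  have hev : ∀ᶠ s in nhdsWithin (0:ℝ) (Ioi 0), ∀ j, s ^ ℓ j < r2 := by
    rw [Filter.eventually_all]
    intro j
    have : Filter.Tendsto (fun s : ℝ => s ^ ℓ j) (nhdsWithin 0 (Ioi 0)) (nhds ((0:ℝ) ^ ℓ j)) :=
      (Real.continuousAt_rpow_const 0 (ℓ j) (Or.inr (hℓpos j).le)).tendsto.mono_left nhdsWithin_le_nhds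
    rw [Real.zero_rpow (hℓpos j).ne'] at this
    exact this.eventually_lt_const hr2p
  obtain ⟨s1, hs1r, hs1⟩ := (hev.and self_mem_nhdsWithin).exists
  have hs1' : (0:ℝ) < s1 := hs1
  let bound : (Fin d → ℕ) → ℝ := fun β => s1 ^ (-L a) * ‖p β * ∏ j : Fin d, (r2 : ℂ) ^ β j‖
  have hbs : Summable bound := hsum0.mul_left _
  let φ : ℝ → (Fin d → ℕ) → ℝ := fun s β => if β = a then 0 else ‖p β‖ * s ^ (L β - L a)
  have hφ0 : ∀ s, 0 < s → ∀ β, 0 ≤ φ s β := by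
    intro s hs β
    simp only [φ]
    split_ifs
    · exact le_rfl
    · positivity
  have hφb : ∀ s, 0 < s → s ≤ s1 → ∀ β, ‖φ s β‖ ≤ bound β := by
    intro s hs hss β
    rw [Real.norm_of_nonneg (hφ0 s hs β)]
    simp only [φ, bound]
    split_ifs with h
    · positivity
    · by_cases hpβ : p β = 0
      · simp [hpβ]
      · have hlt := hpmin β hpβ h
        have h1 : s ^ (L β - L a) ≤ s1 ^ (L β - L a) :=
          Real.rpow_le_rpow hs.le hss (by linarith)
        have h2 : s1 ^ (L β - L a) = s1 ^ (-L a) * s1 ^ L β := by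
          rw [← Real.rpow_add hs1']; congr 1; ring
        have h3 : s1 ^ L β ≤ ∏ j : Fin d, r2 ^ β j := by
          rw [← hLs s1 hs1']
          refine Finset.prod_le_prod (fun j _ => by positivity) fun j _ => ?_
          exact pow_le_pow_left₀ (by positivity) (hs1r j).le _
        have h4 : ‖∏ j : Fin d, (r2 : ℂ) ^ β j‖ = ∏ j : Fin d, r2 ^ β j := by
          rw [norm_prod]
          refine Finset.prod_congr rfl fun j _ => ?_
          rw [norm_pow, Complex.norm_real, Real.norm_of_nonneg hr2p.le]
        rw [norm_mul, h4]
        calc ‖p β‖ * s ^ (L β - L a) ≤ ‖p β‖ * (s1 ^ (-L a) * s1 ^ L β) := by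
              rw [← h2]; gcongr
          _ ≤ ‖p β‖ * (s1 ^ (-L a) * ∏ j : Fin d, r2 ^ β j) := by gcongr
          _ = _ := by ring
  have hev1 : ∀ᶠ s in nhdsWithin (0:ℝ) (Ioi 0), s ∈ Ioo 0 s1 := Ioo_mem_nhdsGT hs1'
  have htend : Filter.Tendsto (fun s => ∑' β, φ s β) (nhdsWithin (0:ℝ) (Ioi 0))
      (nhds (∑' _ : Fin d → ℕ, (0:ℝ))) := by
    refine tendsto_tsum_of_dominated_convergence hbs (fun β => ?_) ?_
    · simp only [φ]
      split_ifs with h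
      · exact tendsto_const_nhds
      · by_cases hpβ : p β = 0
        · simp [hpβ]
        · have hlt := hpmin β hpβ h
          have : Filter.Tendsto (fun s : ℝ => s ^ (L β - L a)) (nhdsWithin 0 (Ioi 0))
              (nhds ((0:ℝ) ^ (L β - L a))) :=
            (Real.continuousAt_rpow_const 0 _ (Or.inr (by linarith))).tendsto.mono_left
              nhdsWithin_le_nhds
          rw [Real.zero_rpow (by linarith)] at this
          simpa using this.const_mul ‖p β‖
    · filter_upwards [hev1] with s hs β
      exact hφb s hs.1 hs.2.le β
  rw [tsum_zero] at htend
  set N : ℝ := 2 ^ (∑ j, a j) with hN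
  have hNp : 0 < N := by positivity
  have hcpos : 0 < ‖p a‖ / 2 / N := by
    have := norm_pos_iff.2 hpa
    positivity
  have hfin := (htend.eventually_lt_const hcpos).and hev1
  obtain ⟨s2, hs2, hsub2⟩ := mem_nhdsGT_iff_exists_Ioo_subset.1 hfin
  have hs2' : (0:ℝ) < s2 := hs2
  refine ⟨s2 / 2, by positivity, fun s hs hss => ?_⟩
  obtain ⟨hlt, -, hss1⟩ := hsub2 ⟨hs, by linarith⟩
  have hsr : ∀ j, s ^ ℓ j < r2 := fun j =>
    (Real.rpow_le_rpow hs.le hss1.le (hℓpos j).le).trans_lt (hs1r j)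
  refine ⟨p a, s ^ L a * ∑' β, φ s β, hpa, ?_, ?_, ?_⟩
  · intro x hx j
    have h1 := hx j
    have h2 := hsr j
    rw [hr2] at h2
    linarith
  · intro x hx
    have hx1 : x ∈ pd (fun _ : Fin d => r0 / 2) := by
      intro j
      have h1 := hx j
      have h2 := hsr j
      rw [hr2] at h2
      simp only at h1 ⊢
      linarith
    have h1 := (hp x hx1).sub (hasSum_ite_eq a (p a * ∏ j, x j ^ a j))
    have hφs : Summable (φ s) := Summable.of_norm_bounded hbs (hφb s hs hss1.le)
    have h2 := hφs.hasSum.mul_left (s ^ L a)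
    refine h1.norm_le_of_bounded h2 fun β => ?_
    simp only [φ]
    by_cases hβ : β = a
    · simp [hβ]
    · simp only [hβ, if_false, sub_zero]
      rw [norm_mul, norm_prod]
      have h3 : ∏ j, ‖x j ^ β j‖ ≤ s ^ L β := by
        rw [← hLs s hs]
        refine Finset.prod_le_prod (fun j _ => norm_nonneg _) fun j _ => ?_
        rw [norm_pow]
        exact pow_le_pow_left₀ (norm_nonneg _) (hx j).le _
      have h4 : s ^ L β = s ^ L a * s ^ (L β - L a) := by
        rw [← Real.rpow_add hs]; congr 1; ring
      calc _ ≤ ‖p β‖ * s ^ L β := by gcongr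
        _ = _ := by rw [h4]; ring
  · have h1 : ∏ j, (2 / s ^ ℓ j) ^ a j = N / s ^ L a := by
      rw [← hLs s hs a, hN, ← Finset.prod_pow_eq_pow_sum, ← Finset.prod_div_distrib]
      refine Finset.prod_congr rfl fun j _ => ?_
      rw [div_pow]
    rw [h1]
    have h2 : 0 < s ^ L a := Real.rpow_pos_of_pos hs _
    have h3 : N / s ^ L a * (s ^ L a * ∑' β, φ s β) = (∑' β, φ s β) * N := by
      field_simp
    rw [h3]
    exact ((lt_div_iff₀ hNp).1 hlt).le

/-- **Weierstrass division for bounded holomorphic functions** (Lemma 2.7).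
With `ℓ` an injective linear form with positive coefficients and `P` holomorphic near `0`,
not identically zero, `P(0) = 0`, with `ℓ`-minimal Taylor exponent `a`, there is `s₀ > 0`
such that for `0 < s ≤ s₀` every bounded holomorphic `g` on `D_s` can be divided as
`g = q·P + r` with `q, r` bounded holomorphic on `D_s`, the Taylor coefficients of `r`
supported off `a + ℕ^d`, uniform bounds `sup|q|, sup|r| ≤ C·sup|g|`, and uniqueness. -/
theorem weierstrass_division_bounded_holomorphic
    (d : ℕ) (hd : 1 ≤ d) (ℓ : Fin d → ℝ) (hℓpos : ∀ j, 0 < ℓ j)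
    (hℓinj : Function.Injective fun β : Fin d → ℕ => ∑ j, ℓ j * (β j : ℝ))
    (r0 : ℝ) (hr0 : 0 < r0)
    (P : (Fin d → ℂ) → ℂ) (hP : AnalyticOnNhd ℂ P (polydisk d r0))
    (hPne : ∃ x ∈ polydisk d r0, P x ≠ 0) (hP0 : P 0 = 0)
    (a : Fin d → ℕ)
    (ha : mixedPartial a P 0 ≠ 0)
    (hamin : ∀ β : Fin d → ℕ, mixedPartial β P 0 ≠ 0 → β ≠ a →
      ∑ j, ℓ j * (a j : ℝ) < ∑ j, ℓ j * (β j : ℝ)) :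
    ∃ s0 > 0, ∀ s : ℝ, 0 < s → s ≤ s0 →
      weightedPolydisk d ℓ s ⊆ polydisk d r0 ∧
      ∃ C > 0,
        ∀ g : (Fin d → ℂ) → ℂ, AnalyticOnNhd ℂ g (weightedPolydisk d ℓ s) →
          (∃ Mg, ∀ x ∈ weightedPolydisk d ℓ s, ‖g x‖ ≤ Mg) →
          ∃ q r : (Fin d → ℂ) → ℂ,
            AnalyticOnNhd ℂ q (weightedPolydisk d ℓ s) ∧
            AnalyticOnNhd ℂ r (weightedPolydisk d ℓ s) ∧
            (∀ x ∈ weightedPolydisk d ℓ s, g x = q x * P x + r x) ∧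
            (∀ β : Fin d → ℕ, (∀ j, a j ≤ β j) → mixedPartial β r 0 = 0) ∧
            (∀ Mg : ℝ, (∀ x ∈ weightedPolydisk d ℓ s, ‖g x‖ ≤ Mg) →
              (∀ x ∈ weightedPolydisk d ℓ s, ‖q x‖ ≤ C * Mg) ∧
              (∀ x ∈ weightedPolydisk d ℓ s, ‖r x‖ ≤ C * Mg)) ∧
            (∀ q' r' : (Fin d → ℂ) → ℂ,
              AnalyticOnNhd ℂ q' (weightedPolydisk d ℓ s) →
              AnalyticOnNhd ℂ r' (weightedPolydisk d ℓ s) →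
              (∃ M', ∀ x ∈ weightedPolydisk d ℓ s,
                ‖q' x‖ ≤ M' ∧ ‖r' x‖ ≤ M') →
              (∀ x ∈ weightedPolydisk d ℓ s, g x = q' x * P x + r' x) →
              (∀ β : Fin d → ℕ, (∀ j, a j ≤ β j) → mixedPartial β r' 0 = 0) →
              ∀ x ∈ weightedPolydisk d ℓ s, q' x = q x ∧ r' x = r x) := by
  obtain ⟨s1, hs1, H⟩ := small_bound ℓ hℓpos hr0 hP a ha hamin
  refine ⟨s1, hs1, fun s hs hss => ?_⟩
  obtain ⟨c0, Hb, hc0, hsub, hb, hθ⟩ := H s hs hss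
  refine ⟨hsub, ?_⟩
  exact division_core (ρ := fun j => s ^ ℓ j) (fun j => Real.rpow_pos_of_pos hs _)
    (hP.mono hsub) a hc0 hb hθ
end
end
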